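/- The contraction operator δ_e on decorated graphs of even type is well defined on the quotient space D_e (i.e., it is compatible with the sign relations on decorations), it satisfies δ_e ∘ δ_e = 0, and it maps D_e^{k,m} into D_e^{k,m+1} for every order k and every degree m. -/

import Mathlib

open scoped Classical

/-!
# The even graph complex `(D_e, δ_e)` and its coboundary operator

We encode a *decorated graph of even type* as follows.  Its vertices are the natural
numbers `0, …, ve + vi - 1`: the labels `0, …, ve - 1` are the external vertices, placed
on the distinguished oriented circle in the (cyclically increasing) order of their labels,
and the labels `ve, …, ve + vi - 1` are the internal vertices (which carry no decoration;
the implicit labels are factored out by the relation below).  The edges are labelled by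
their position in a list, and each edge is recorded as a pair of vertices (it carries no
orientation; the relation below identifies a pair with its swap, with no sign).  Labels
here are 0-indexed, the paper's labels being 1-indexed.
-/

/-- A decorated graph of even type: `ve` external vertices (labels `0,…,ve-1`, lying on
the oriented circle in this cyclic order), `vi` internal vertices (labels
`ve,…,ve+vi-1`), and a list of edges; the edge labelled `α` (0-indexed) is the `α`-th
entry of the list. -/
structure EvenGraph where
  ve : ℕ
  vi : ℕ
  edges : List (ℕ × ℕ)
deriving DecidableEq

namespace EvenGraph

/-- Total number of vertices. -/
def nv (g : EvenGraph) : ℕ := g.ve + g.vi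

/-- The valence of a vertex: the number of edge-ends at it. -/
def valence (g : EvenGraph) (v : ℕ) : ℕ :=
  (g.edges.map fun e => (if e.1 = v then 1 else 0) + (if e.2 = v then 1 else 0)).sum

/-- Two vertices are adjacent if joined by an edge or if both lie on the circle. -/
def adj (g : EvenGraph) (a b : ℕ) : Prop :=
  (∃ e ∈ g.edges, (e.1 = a ∧ e.2 = b) ∨ (e.1 = b ∧ e.2 = a)) ∨
    (a < g.ve ∧ b < g.ve)

/-- Connectivity of the graph (including the distinguished circle). -/
def Connected (g : EvenGraph) : Prop :=
  ∀ a b, a < g.nv → b < g.nv → Relation.ReflTransGen g.adj a b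

/-- A valid decorated graph of even type: edges join actual vertices, internal vertices
are at least trivalent, external vertices carry at least one edge-end, and the graph is
connected. -/
def IsValid (g : EvenGraph) : Prop :=
  (∀ e ∈ g.edges, e.1 < g.nv ∧ e.2 < g.nv) ∧
  (∀ v, g.ve ≤ v → v < g.nv → 3 ≤ g.valence v) ∧
  (∀ v, v < g.ve → 1 ≤ g.valence v) ∧
  g.Connected

/-- Number of edges. -/
def numEdges (g : EvenGraph) : ℕ := g.edges.length

/-- The *order* of a graph: `e - v_i`. -/
def ordZ (g : EvenGraph) : ℤ := (g.numEdges : ℤ) - (g.vi : ℤ)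

/-- The *degree* of a graph: `2e - 3v_i - v_e`. -/
def degZ (g : EvenGraph) : ℤ := 2 * (g.numEdges : ℤ) - 3 * (g.vi : ℤ) - (g.ve : ℤ)

/-- A *regular edge*: neither a small loop nor a chord. -/
def isRegular (g : EvenGraph) (e : ℕ × ℕ) : Prop :=
  e.1 ≠ e.2 ∧ ¬(e.1 < g.ve ∧ e.2 < g.ve)

/-- Two vertices joined by more than one edge. -/
def hasDoubleEdge (g : EvenGraph) : Prop :=
  ∃ a b : Fin g.edges.length, a ≠ b ∧
    (g.edges.get b = g.edges.get a ∨ g.edges.get b = (g.edges.get a).swap)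

/-- An internal small loop. -/
def hasInternalLoop (g : EvenGraph) : Prop :=
  ∃ e ∈ g.edges, e.1 = e.2 ∧ g.ve ≤ e.1

end EvenGraph

/-- Vertex relabelling after merging the vertices `i` and `j`: the merged vertex receives
the label `min i j`, and all labels greater than `max i j` are lowered by one. -/
def mergeMap (i j x : ℕ) : ℕ :=
  if x = i ∨ x = j then min i j else if max i j < x then x - 1 else x

namespace EvenGraph

/-- Contraction of the regular edge labelled `a`: the edge is removed (all higher edge
labels are lowered by one) and its end-points are merged. -/
def contractEdgeAt (g : EvenGraph) (a : Fin g.edges.length) : EvenGraph :=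
  let p := g.edges.get a
  { ve := g.ve
    vi := g.vi - 1
    edges := (g.edges.eraseIdx a).map fun q =>
      (mergeMap p.1 p.2 q.1, mergeMap p.1 p.2 q.2) }

/-- Contraction of the arc running (along the circle orientation) from the external vertex
`i` to the consecutive external vertex `j`.  A short chord joining `i` and `j` becomes an
external small loop at the merged vertex. -/
def contractArc (g : EvenGraph) (i j : ℕ) : EvenGraph where
  ve := g.ve - 1
  vi := g.vi
  edges := g.edges.map fun q =>
    if (q.1 = i ∧ q.2 = j) ∨ (q.1 = j ∧ q.2 = i) then (min i j, min i j)
    else (mergeMap i j q.1, mergeMap i j q.2)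

/-- The arcs of the circle, as ordered pairs of consecutive external vertices (oriented
along the circle). -/
def arcs (g : EvenGraph) : List (ℕ × ℕ) :=
  if 2 ≤ g.ve then ((List.range (g.ve - 1)).map fun i => (i, i + 1)) ++ [(g.ve - 1, 0)]
  else []

end EvenGraph

/-- The arc-contraction sign `σ(i,j)` (0-indexed version of the paper's
`σ(i,j) = (-1)^j` for `j > i` and `(-1)^{i+1}` for `j < i`, which is stated for 1-indexed
labels). -/
def csign (i j : ℕ) : ℝ := if i < j then (-1) ^ (j + 1) else (-1) ^ i

/-- The value of the coboundary operator `δ_e` on a single decorated graph: the signed sum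
of the contractions of all regular edges and all arcs; the sign for the edge labelled `α`
(0-indexed here; the paper's 1-indexed sign is `(-1)^{α+1+v_e}`) is `(-1)^{α+v_e}`.
(On graphs that are `0` in `D_e` by the relations, the operator is extended by `0`.) -/
noncomputable def deltaGenE (g : EvenGraph) : EvenGraph →₀ ℝ :=
  if g.IsValid ∧ ¬g.hasDoubleEdge ∧ ¬g.hasInternalLoop then
    ((List.finRange g.edges.length).map fun a =>
        if g.isRegular (g.edges.get a) then
          ((-1 : ℝ) ^ ((a : ℕ) + g.ve)) • Finsupp.single (g.contractEdgeAt a) (1 : ℝ)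
        else 0).sum
      + (g.arcs.map fun p =>
          csign p.1 p.2 • Finsupp.single (g.contractArc p.1 p.2) (1 : ℝ)).sum
  else 0

/-- The coboundary operator `δ_e` on the free vector space generated by decorated graphs
of even type. -/
noncomputable def deltaFreeE : (EvenGraph →₀ ℝ) →ₗ[ℝ] (EvenGraph →₀ ℝ) :=
  Finsupp.lsum ℝ fun g => LinearMap.toSpanSingleton ℝ (EvenGraph →₀ ℝ) (deltaGenE g)

/-- Relabelling of vertices by a permutation `π` of the internal labels and a cyclic
rotation by `r` of the external labels. -/
def permVertexE (ve vi : ℕ) (π : Equiv.Perm (Fin vi)) (r : ℕ) (v : ℕ) : ℕ :=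
  if v < ve then (v + r) % ve
  else if h : v - ve < vi then ve + (π ⟨v - ve, h⟩ : Fin vi) else v

/-- `EvenRel g g' ε` holds when `g'` is obtained from `g` by a cyclic permutation of the
external labels, an arbitrary relabelling of the (undecorated) internal vertices, a
permutation `τ` of the edge labels, and swaps of the (unoriented) end-point pairs;
`ε = (-1)^{π+l}` is the corresponding sign, where `π` is the order of the cyclic
permutation of the external labels and `l` the order of `τ`. -/
def EvenRel (g g' : EvenGraph) (ε : ℝ) : Prop :=
  g'.ve = g.ve ∧ g'.vi = g.vi ∧
  ∃ (π : Equiv.Perm (Fin g.vi)) (r : ℕ)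
    (h : g'.edges.length = g.edges.length)
    (τ : Equiv.Perm (Fin g.edges.length)) (sw : Fin g.edges.length → Bool),
    (∀ a : Fin g.edges.length,
        g'.edges.get (Fin.cast h.symm (τ a)) =
          (let p := g.edges.get a
           let q := (permVertexE g.ve g.vi π r p.1, permVertexE g.ve g.vi π r p.2)
           if sw a then (q.2, q.1) else q)) ∧
    ε = ((Equiv.Perm.sign (finRotate g.ve ^ r) : ℤ) : ℝ) * ((Equiv.Perm.sign τ : ℤ) : ℝ)

/-- The defining relations of `D_e`: non-graphs are `0`, graphs with a double edge are
`0`, graphs with an internal small loop are `0`, and graphs differing only in the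
decoration are identified up to the sign `(-1)^{π+l}`. -/
def evenRelSet : Set (EvenGraph →₀ ℝ) :=
  {x | ∃ g : EvenGraph, ¬g.IsValid ∧ x = Finsupp.single g 1} ∪
  {x | ∃ g : EvenGraph, g.hasDoubleEdge ∧ x = Finsupp.single g 1} ∪
  {x | ∃ g : EvenGraph, g.hasInternalLoop ∧ x = Finsupp.single g 1} ∪
  {x | ∃ g g' ε, EvenRel g g' ε ∧ x = Finsupp.single g 1 - ε • Finsupp.single g' 1}

/-- The submodule of relations. -/
noncomputable def evenRelations : Submodule ℝ (EvenGraph →₀ ℝ) := Submodule.span ℝ evenRelSet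

/-- The even graph complex `D_e`, the quotient of the free vector space on decorated
graphs of even type by the relations. -/
abbrev De := (EvenGraph →₀ ℝ) ⧸ evenRelations

/-- The subspace `D_e^{k,m}` of `D_e` spanned by the graphs of order `k` and degree `m`. -/
noncomputable def evenPiece (k m : ℤ) : Submodule ℝ De :=
  Submodule.span ℝ {x | ∃ g : EvenGraph,
    g.IsValid ∧ g.ordZ = k ∧ g.degZ = m ∧
    x = Submodule.Quotient.mk (p := evenRelations) (Finsupp.single g 1)}

theorem mergeMap_symm (i j x : ℕ) : mergeMap i j x = mergeMap j i x := by
  unfold mergeMap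
  split_ifs <;> omega

theorem mergeMap_of_lt {i j : ℕ} (h : i < j) (x : ℕ) :
    mergeMap i j x = if x = j then i else if j < x then x - 1 else x := by
  unfold mergeMap
  split_ifs <;> omega

theorem mergeMap_eq_iff {i j : ℕ} (h : i ≠ j) (x y : ℕ) :
    mergeMap i j x = mergeMap i j y ↔ x = y ∨ x = i ∧ y = j ∨ x = j ∧ y = i := by
  rcases h.lt_or_gt with h | h
  · simp only [mergeMap_of_lt h]
    split_ifs <;> omega
  · simp only [mergeMap_symm i j, mergeMap_of_lt h]
    split_ifs <;> omega

theorem mergeMap_lt {i j x N : ℕ} (h : i ≠ j) (hi : i < N) (hj : j < N) (hx : x < N) :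
    mergeMap i j x < N - 1 := by
  unfold mergeMap
  split_ifs <;> omega

theorem mergeMap_lt_iff_of_lt {i j x N : ℕ} (h : i ≠ j) (hi : i < N) (hj : j < N) :
    mergeMap i j x < N - 1 ↔ x < N := by
  unfold mergeMap
  split_ifs <;> omega

theorem mergeMap_of_lt_max {i j x : ℕ} (hx : x < max i j) : mergeMap i j x = x := by
  unfold mergeMap
  split_ifs <;> omega

theorem mergeMap_comm_of_lt {i j k l : ℕ} (hij : i < j) (hkl : k < l)
    (h : mergeMap i j k ≠ mergeMap i j l) (x : ℕ) :
    mergeMap (mergeMap i j k) (mergeMap i j l) (mergeMap i j x) =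
      mergeMap (mergeMap k l i) (mergeMap k l j) (mergeMap k l x) := by
  simp only [mergeMap_of_lt hij, mergeMap_of_lt hkl] at *
  generalize hk : (if k = j then i else if j < k then k - 1 else k) = k' at *
  generalize hl : (if l = j then i else if j < l then l - 1 else l) = l' at *
  generalize hx : (if x = j then i else if j < x then x - 1 else x) = x' at *
  generalize hi : (if i = l then k else if l < i then i - 1 else i) = i' at *
  generalize hj : (if j = l then k else if l < j then j - 1 else j) = j' at *
  generalize hy : (if x = l then k else if l < x then x - 1 else x) = y' at *
  unfold mergeMap
  rcases lt_trichotomy j l with h1 | h1 | h1 <;> rcases lt_trichotomy x j with h2 | h2 | h2 <;>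
    rcases lt_trichotomy x l with h3 | h3 | h3 <;> grind

/-- Two successive mergings depend only on the resulting partition of the vertices. -/
theorem mergeMap_comm {i j k l : ℕ} (hij : i ≠ j) (hkl : k ≠ l)
    (h : mergeMap i j k ≠ mergeMap i j l) (x : ℕ) :
    mergeMap (mergeMap i j k) (mergeMap i j l) (mergeMap i j x) =
      mergeMap (mergeMap k l i) (mergeMap k l j) (mergeMap k l x) := by
  rcases hij.lt_or_gt with hij | hij <;> rcases hkl.lt_or_gt with hkl | hkl
  · exact mergeMap_comm_of_lt hij hkl h x
  · rw [mergeMap_symm (mergeMap i j k)]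
    simp only [mergeMap_symm k l]
    exact mergeMap_comm_of_lt hij hkl h.symm x
  · rw [mergeMap_symm (mergeMap k l i)]
    simp only [mergeMap_symm i j] at h ⊢
    exact mergeMap_comm_of_lt hij hkl h x
  · rw [mergeMap_symm (mergeMap k l i), mergeMap_symm (mergeMap i j k)]
    simp only [mergeMap_symm i j, mergeMap_symm k l] at h ⊢
    exact mergeMap_comm_of_lt hij hkl h.symm x

namespace EvenGraph

/-- Relabelling of the end-points of an edge when the vertices `p.1` and `p.2` are merged. -/
def mergeEdge (p q : ℕ × ℕ) : ℕ × ℕ := (mergeMap p.1 p.2 q.1, mergeMap p.1 p.2 q.2)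

theorem mergeEdge_comm {p q : ℕ × ℕ} (hp : p.1 ≠ p.2) (hq : q.1 ≠ q.2)
    (h : (mergeEdge p q).1 ≠ (mergeEdge p q).2) (x : ℕ × ℕ) :
    mergeEdge (mergeEdge p q) (mergeEdge p x) = mergeEdge (mergeEdge q p) (mergeEdge q x) :=
  Prod.ext (mergeMap_comm hp hq h _) (mergeMap_comm hp hq h _)

/-- An edge with ends `p` is regular in a graph with `ve` external vertices. -/
def Regular (ve : ℕ) (p : ℕ × ℕ) : Prop := p.1 ≠ p.2 ∧ ¬(p.1 < ve ∧ p.2 < ve)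

theorem regular_mergeEdge_comm {ve : ℕ} {p q : ℕ × ℕ} (hp : Regular ve p) :
    Regular ve q ∧ Regular ve (mergeEdge q p) ↔ Regular ve (mergeEdge p q) := by
  obtain ⟨h1, h2⟩ := hp
  obtain ⟨a, b⟩ := p
  obtain ⟨c, d⟩ := q
  simp only [Regular, mergeEdge] at *
  by_cases hcd : c = d
  · simp [hcd]
  rw [Ne, Ne, Ne, mergeMap_eq_iff h1, mergeMap_eq_iff hcd]
  unfold mergeMap
  grind

/-- The edge at position `a`, with a junk value out of range. -/
def edge (g : EvenGraph) (a : ℕ) : ℕ × ℕ := g.edges.getD a (0, 0)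

/-- Contraction of the edge at position `a`. -/
def contractEdge (g : EvenGraph) (a : ℕ) : EvenGraph :=
  ⟨g.ve, g.vi - 1, (g.edges.eraseIdx a).map (mergeEdge (g.edge a))⟩

/-- The arc starting at the external vertex `i`. -/
def arc (ve i : ℕ) : ℕ × ℕ := (i, (i + 1) % ve)

/-- Contraction of the arc starting at the external vertex `i`. -/
def contractArcAt (g : EvenGraph) (i : ℕ) : EvenGraph :=
  ⟨g.ve - 1, g.vi, g.edges.map (mergeEdge (arc g.ve i))⟩

/-- The number of arcs that can be contracted. -/
def numArcs (ve : ℕ) : ℕ := if 2 ≤ ve then ve else 0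

/-- The contribution of an edge to the coboundary. -/
noncomputable def edgeTerm (g : EvenGraph) (a : ℕ) : EvenGraph →₀ ℝ :=
  if Regular g.ve (g.edge a) then (-1 : ℝ) ^ (a + g.ve) • Finsupp.single (g.contractEdge a) 1
  else 0

/-- The contribution of an arc to the coboundary. -/
noncomputable def arcTerm (g : EvenGraph) (i : ℕ) : EvenGraph →₀ ℝ :=
  (-1 : ℝ) ^ i • Finsupp.single (g.contractArcAt i) 1

/-- The signed sum of all contractions, without any condition on the graph. -/
noncomputable def cobound (g : EvenGraph) : EvenGraph →₀ ℝ :=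
  ∑ a ∈ Finset.range g.edges.length, g.edgeTerm a +
    ∑ i ∈ Finset.range (numArcs g.ve), g.arcTerm i

theorem contractArc_eq {g : EvenGraph} (i : ℕ) :
    g.contractArc i ((i + 1) % g.ve) = g.contractArcAt i := by
  simp only [contractArc, contractArcAt, EvenGraph.mk.injEq, true_and]
  refine List.map_congr_left fun q _ => ?_
  split_ifs with h
  · obtain ⟨x, y⟩ := q
    obtain ⟨h1, h2⟩ | ⟨h1, h2⟩ := h <;> simp only at h1 h2 <;>
      simp [mergeEdge, arc, mergeMap, h1, h2]
  · rfl

theorem deltaGenE_of_good {g : EvenGraph}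
    (hg : g.IsValid ∧ ¬g.hasDoubleEdge ∧ ¬g.hasInternalLoop) : deltaGenE g = g.cobound := by
  rw [deltaGenE, if_pos hg, cobound]
  congr 1
  · rw [Finset.sum_range, ← List.ofFn_id, List.map_ofFn, List.sum_ofFn]
    refine Finset.sum_congr rfl fun a _ => ?_
    have he : g.edge a = g.edges.get a := by simp [edge]
    simp only [edgeTerm, he, contractEdge, Function.comp]
    exact if_congr Iff.rfl rfl rfl
  · unfold arcs numArcs
    split_ifs with h
    · obtain ⟨n, hn⟩ : ∃ n, g.ve = n + 1 := ⟨g.ve - 1, by omega⟩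
      rw [hn, Finset.sum_range_succ, List.map_append, List.sum_append, List.map_map,
        Finset.sum_range, Nat.add_sub_cancel, ← List.sum_ofFn]
      congr 1
      · congr 1
        refine List.ext_getElem (by simp) fun i hi _ => ?_
        simp only [List.length_map, List.length_range] at hi
        have : (i + 1) % g.ve = i + 1 := Nat.mod_eq_of_lt (by omega)
        simp [arcTerm, csign, ← contractArc_eq, this, pow_succ]
      · have : (n + 1) % g.ve = 0 := by rw [hn, Nat.mod_self]
        simp [arcTerm, csign, ← contractArc_eq, this]
    · simp

theorem sum_sum_eq_zero_of_antisymm {M : Type*} [AddCommMonoid M] (n : ℕ) (F : ℕ → ℕ → M)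
    (h : ∀ a b, a ≤ b → b + 1 < n → F a b + F (b + 1) a = 0) :
    ∑ a ∈ Finset.range n, ∑ b ∈ Finset.range (n - 1), F a b = 0 := by
  rw [← Finset.sum_product']
  refine Finset.sum_involution
    (fun x _ => if x.1 ≤ x.2 then (x.2 + 1, x.1) else (x.2, x.1 - 1)) ?_ ?_ ?_ ?_
  · rintro ⟨a, b⟩ hx
    simp only [Finset.mem_product, Finset.mem_range] at hx
    dsimp only
    split_ifs with hab
    · exact h a b hab (by omega)
    · obtain ⟨c, rfl⟩ : ∃ c, a = c + 1 := ⟨a - 1, by omega⟩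
      rw [add_comm]
      exact h b c (by omega) (by omega)
  · rintro ⟨a, b⟩ hx -
    dsimp only
    split_ifs <;> simp only [ne_eq, Prod.mk.injEq] <;> omega
  · rintro ⟨a, b⟩ hx
    simp only [Finset.mem_product, Finset.mem_range] at hx
    dsimp only
    split_ifs <;> simp only [Finset.mem_product, Finset.mem_range] <;> omega
  · rintro ⟨a, b⟩ hx
    dsimp only
    by_cases hab : a ≤ b
    · simp [hab]
    · have h' : b ≤ a - 1 := by omega
      simp only [if_neg hab, if_pos h', Prod.mk.injEq, and_true]
      omega

theorem edge_contractEdge_of_le {g : EvenGraph} {a b : ℕ} (hab : a ≤ b)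
    (hb : b + 1 < g.edges.length) :
    (g.contractEdge a).edge b = mergeEdge (g.edge a) (g.edge (b + 1)) := by
  have hb' : b < (g.edges.eraseIdx a).length := by
    rw [List.length_eraseIdx_of_lt (by omega)]; omega
  simp only [edge, contractEdge]
  rw [List.getD_eq_getElem _ _ (by simpa using hb'), List.getD_eq_getElem _ _ hb,
    List.getElem_map, List.getElem_eraseIdx, dif_neg (by omega)]

theorem edge_contractEdge_of_lt {g : EvenGraph} {a b : ℕ} (hab : b < a)
    (ha : a < g.edges.length) :
    (g.contractEdge a).edge b = mergeEdge (g.edge a) (g.edge b) := by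
  have hb' : b < (g.edges.eraseIdx a).length := by
    rw [List.length_eraseIdx_of_lt (by omega)]; omega
  simp only [edge, contractEdge]
  rw [List.getD_eq_getElem _ _ (by simpa using hb'), List.getD_eq_getElem g.edges _ (hab.trans ha),
    List.getElem_map, List.getElem_eraseIdx, dif_pos hab]

theorem edge_contractArcAt {g : EvenGraph} {a i : ℕ} (ha : a < g.edges.length) :
    (g.contractArcAt i).edge a = mergeEdge (arc g.ve i) (g.edge a) := by
  simp only [edge, contractArcAt]
  rw [List.getD_eq_getElem _ _ (by simpa using ha), List.getD_eq_getElem _ _ ha, List.getElem_map]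

theorem length_contractEdge {g : EvenGraph} {a : ℕ} (ha : a < g.edges.length) :
    (g.contractEdge a).edges.length = g.edges.length - 1 := by
  simp [contractEdge, List.length_eraseIdx_of_lt ha]

theorem length_contractArcAt (g : EvenGraph) (i : ℕ) :
    (g.contractArcAt i).edges.length = g.edges.length := by
  simp [contractArcAt]

theorem eraseIdx_eraseIdx {α : Type*} (l : List α) {a b : ℕ} (hab : a ≤ b) :
    (l.eraseIdx a).eraseIdx b = (l.eraseIdx (b + 1)).eraseIdx a := by
  induction l generalizing a b with
  | nil => simp
  | cons x l ih =>
    cases a with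
    | zero => simp
    | succ a =>
      obtain ⟨c, rfl⟩ : ∃ c, b = c + 1 := ⟨b - 1, by omega⟩
      simp [ih (Nat.le_of_succ_le_succ hab)]

theorem map_mergeEdge_mergeEdge {p q : ℕ × ℕ} (hp : p.1 ≠ p.2) (hq : q.1 ≠ q.2)
    (h : (mergeEdge p q).1 ≠ (mergeEdge p q).2) (l : List (ℕ × ℕ)) :
    (l.map (mergeEdge p)).map (mergeEdge (mergeEdge p q)) =
      (l.map (mergeEdge q)).map (mergeEdge (mergeEdge q p)) := by
  rw [List.map_map, List.map_map]
  exact List.map_congr_left fun x _ => mergeEdge_comm hp hq h x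

theorem contractEdge_def (g : EvenGraph) (a : ℕ) : g.contractEdge a =
    ⟨g.ve, g.vi - 1, (g.edges.eraseIdx a).map (mergeEdge (g.edge a))⟩ := rfl

theorem contractEdge_contractEdge {g : EvenGraph} {a b : ℕ} (hab : a ≤ b)
    (hb : b + 1 < g.edges.length) (hp : Regular g.ve (g.edge a))
    (h : Regular g.ve (mergeEdge (g.edge a) (g.edge (b + 1)))) :
    (g.contractEdge a).contractEdge b = (g.contractEdge (b + 1)).contractEdge a := by
  have hq := (regular_mergeEdge_comm hp).2 h
  rw [contractEdge_def (g.contractEdge a), edge_contractEdge_of_le hab hb,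
    contractEdge_def (g.contractEdge (b + 1)),
    edge_contractEdge_of_lt (Nat.lt_succ_of_le hab) hb]
  simp only [contractEdge, EvenGraph.mk.injEq, true_and]
  rw [List.eraseIdx_map, List.eraseIdx_map, map_mergeEdge_mergeEdge hp.1 hq.1.1 h.1,
    eraseIdx_eraseIdx _ hab]

theorem arc_fst_ne_snd {ve i : ℕ} (hi : i < numArcs ve) : (arc ve i).1 ≠ (arc ve i).2 := by
  unfold numArcs at hi
  split_ifs at hi with h
  · simp only [arc]
    rcases Nat.lt_or_ge (i + 1) ve with h1 | h1
    · rw [Nat.mod_eq_of_lt h1]; omega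
    · obtain rfl : ve = i + 1 := by omega
      rw [Nat.mod_self]; omega
  · omega

theorem arc_lt {ve i : ℕ} (hi : i < numArcs ve) : (arc ve i).1 < ve ∧ (arc ve i).2 < ve := by
  unfold numArcs at hi
  split_ifs at hi with h
  · exact ⟨hi, Nat.mod_lt _ (by omega)⟩
  · omega

theorem mergeEdge_of_regular {ve : ℕ} {p q : ℕ × ℕ} (hp : Regular ve p)
    (hq : q.1 < ve ∧ q.2 < ve) : mergeEdge p q = q := by
  have : ve ≤ max p.1 p.2 := by
    have := hp.2
    omega
  exact Prod.ext (mergeMap_of_lt_max (by omega)) (mergeMap_of_lt_max (by omega))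

theorem regular_mergeEdge_arc {ve i : ℕ} (hi : i < numArcs ve) (q : ℕ × ℕ) :
    Regular (ve - 1) (mergeEdge (arc ve i) q) ↔ Regular ve q := by
  have h1 := arc_fst_ne_snd hi
  have h2 := arc_lt hi
  simp only [Regular, mergeEdge, mergeMap_lt_iff_of_lt h1 h2.1 h2.2, Ne, mergeMap_eq_iff h1]
  omega

theorem contractEdge_contractArcAt {g : EvenGraph} {a i : ℕ} (ha : a < g.edges.length)
    (hi : i < numArcs g.ve) (hp : Regular g.ve (g.edge a)) :
    (g.contractEdge a).contractArcAt i = (g.contractArcAt i).contractEdge a := by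
  have h1 := mergeEdge_of_regular hp (arc_lt hi)
  have h2 := map_mergeEdge_mergeEdge hp.1 (arc_fst_ne_snd hi)
    (by rw [h1]; exact arc_fst_ne_snd hi) (g.edges.eraseIdx a)
  rw [h1] at h2
  rw [contractEdge_def (g.contractArcAt i), edge_contractArcAt ha]
  simp only [contractEdge, contractArcAt, EvenGraph.mk.injEq, true_and]
  rw [List.eraseIdx_map, ← h2]

theorem mergeEdge_arc_arc_succ {ve i b : ℕ} (hib : i ≤ b) (hb : b + 1 < ve) (hve : 3 ≤ ve) :
    mergeEdge (arc ve i) (arc ve (b + 1)) = arc (ve - 1) b := by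
  have h0 : (i + 1) % ve = i + 1 := Nat.mod_eq_of_lt (by omega)
  simp only [mergeEdge, arc, h0, mergeMap_of_lt (Nat.lt_succ_self i), Prod.mk.injEq]
  refine ⟨by split_ifs <;> omega, ?_⟩
  rcases Nat.lt_or_ge (b + 1 + 1) ve with h | h
  · rw [Nat.mod_eq_of_lt h, Nat.mod_eq_of_lt (by omega : b + 1 < ve - 1)]
    split_ifs <;> omega
  · obtain rfl : ve = b + 1 + 1 := by omega
    simp

theorem mergeEdge_arc_succ_arc {ve i b : ℕ} (hib : i ≤ b) (hb : b + 1 < ve) (hve : 3 ≤ ve) :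
    mergeEdge (arc ve (b + 1)) (arc ve i) = arc (ve - 1) i := by
  have h0 : (i + 1) % ve = i + 1 := Nat.mod_eq_of_lt (by omega)
  simp only [mergeEdge, arc, h0, Prod.mk.injEq]
  rcases Nat.lt_or_ge (b + 1 + 1) ve with h | h
  · rw [Nat.mod_eq_of_lt h, Nat.mod_eq_of_lt (by omega : i + 1 < ve - 1),
      mergeMap_of_lt_max (by omega), mergeMap_of_lt (by omega)]
    refine ⟨rfl, ?_⟩
    split_ifs <;> omega
  · obtain rfl : ve = b + 1 + 1 := by omega
    simp only [Nat.mod_self, mergeMap_symm (b + 1) 0, mergeMap_of_lt (Nat.succ_pos b)]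
    refine ⟨by split_ifs <;> omega, ?_⟩
    rcases hib.lt_or_eq with h1 | rfl
    · rw [Nat.mod_eq_of_lt (by omega)]
      split_ifs <;> omega
    · simp

theorem contractArcAt_contractArcAt {g : EvenGraph} {i b : ℕ} (hib : i ≤ b)
    (hb : b + 1 < g.ve) (hve : 3 ≤ g.ve) :
    (g.contractArcAt i).contractArcAt b = (g.contractArcAt (b + 1)).contractArcAt i := by
  have hn : numArcs g.ve = g.ve := if_pos (by omega)
  have hn' : numArcs (g.ve - 1) = g.ve - 1 := if_pos (by omega)
  have h1 := mergeEdge_arc_arc_succ hib hb hve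
  have h2 := mergeEdge_arc_succ_arc hib hb hve
  have h3 := map_mergeEdge_mergeEdge (arc_fst_ne_snd (by omega : i < numArcs g.ve))
    (arc_fst_ne_snd (by omega : b + 1 < numArcs g.ve))
    (by rw [h1]; exact arc_fst_ne_snd (by omega)) g.edges
  rw [h1, h2] at h3
  simp only [contractArcAt, EvenGraph.mk.injEq, true_and]
  exact h3

/-- The linear extension of `cobound`. -/
noncomputable def coboundLin : (EvenGraph →₀ ℝ) →ₗ[ℝ] (EvenGraph →₀ ℝ) :=
  Finsupp.lsum ℝ fun g => LinearMap.toSpanSingleton ℝ (EvenGraph →₀ ℝ) g.cobound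

theorem coboundLin_single (g : EvenGraph) (c : ℝ) :
    coboundLin (Finsupp.single g c) = c • g.cobound := by
  simp [coboundLin]

theorem sum_edgeTerm_edgeTerm (g : EvenGraph) :
    ∑ a ∈ Finset.range g.edges.length, ∑ b ∈ Finset.range (g.edges.length - 1),
      (if Regular g.ve (g.edge a) then
        (-1 : ℝ) ^ (a + g.ve) • (g.contractEdge a).edgeTerm b else 0) = 0 := by
  refine sum_sum_eq_zero_of_antisymm _ _ fun a b hab hb => ?_
  have hl := edge_contractEdge_of_le hab hb
  have hl' := edge_contractEdge_of_lt (Nat.lt_succ_of_le hab) hb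
  simp only [edgeTerm, hl, hl']
  change (if _ then _ • (if Regular g.ve _ then (-1 : ℝ) ^ (b + g.ve) • _ else _) else _) +
    (if _ then _ • (if Regular g.ve _ then (-1 : ℝ) ^ (a + g.ve) • _ else _) else _) = _
  by_cases hp : Regular g.ve (g.edge a)
  · by_cases h : Regular g.ve (mergeEdge (g.edge a) (g.edge (b + 1)))
    · have hq := (regular_mergeEdge_comm hp).2 h
      rw [if_pos hp, if_pos h, if_pos hq.1, if_pos hq.2, contractEdge_contractEdge hab hb hp h,
        smul_smul, smul_smul, ← add_smul]
      convert zero_smul ℝ _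
      ring
    · rw [if_neg h, if_pos hp, smul_zero, zero_add]
      by_cases hq : Regular g.ve (g.edge (b + 1))
      · rw [if_pos hq, if_neg fun h' => h ((regular_mergeEdge_comm hp).1 ⟨hq, h'⟩), smul_zero]
      · rw [if_neg hq]
  · rw [if_neg hp, zero_add]
    split_ifs with hq h
    · exact absurd ((regular_mergeEdge_comm hq).2 h).1 hp
    · rw [smul_zero]
    · rfl

theorem sum_arcTerm_arcTerm (g : EvenGraph) :
    ∑ i ∈ Finset.range (numArcs g.ve), ∑ b ∈ Finset.range (numArcs (g.ve - 1)),
      (-1 : ℝ) ^ i • (g.contractArcAt i).arcTerm b = 0 := by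
  by_cases hve : 3 ≤ g.ve
  · rw [numArcs, if_pos (by omega), numArcs, if_pos (by omega)]
    refine sum_sum_eq_zero_of_antisymm _ _ fun i b hib hb => ?_
    rw [arcTerm, arcTerm, contractArcAt_contractArcAt hib hb hve, smul_smul, smul_smul, ← add_smul]
    convert zero_smul ℝ _
    ring
  · rw [show numArcs (g.ve - 1) = 0 from if_neg (by omega)]
    simp

theorem edgeTerm_arcTerm_add (g : EvenGraph) {a i : ℕ} (ha : a < g.edges.length)
    (hi : i < numArcs g.ve) :
    (if Regular g.ve (g.edge a) then
        (-1 : ℝ) ^ (a + g.ve) • (g.contractEdge a).arcTerm i else 0) +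
      (-1 : ℝ) ^ i • (g.contractArcAt i).edgeTerm a = 0 := by
  have hr := regular_mergeEdge_arc hi (g.edge a)
  have hv : 1 ≤ g.ve := by have := arc_lt hi; omega
  simp only [edgeTerm, arcTerm, edge_contractArcAt ha]
  change _ + _ • (if Regular (g.ve - 1) _ then (-1 : ℝ) ^ (a + (g.ve - 1)) • _ else _) = _
  rw [hr]
  split_ifs with hp
  · rw [contractEdge_contractArcAt ha hi hp, smul_smul, smul_smul, ← add_smul]
    convert zero_smul ℝ _
    obtain ⟨v, hv⟩ : ∃ v, g.ve = v + 1 := ⟨g.ve - 1, by omega⟩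
    rw [hv, Nat.add_sub_cancel]
    ring
  · simp

theorem coboundLin_edgeTerm (g : EvenGraph) (a : ℕ) :
    coboundLin (g.edgeTerm a) = if Regular g.ve (g.edge a) then
      (-1 : ℝ) ^ (a + g.ve) • (g.contractEdge a).cobound else 0 := by
  unfold edgeTerm
  split_ifs
  · rw [map_smul, coboundLin_single, one_smul]
  · rw [map_zero]

theorem coboundLin_arcTerm (g : EvenGraph) (i : ℕ) :
    coboundLin (g.arcTerm i) = (-1 : ℝ) ^ i • (g.contractArcAt i).cobound := by
  rw [arcTerm, map_smul, coboundLin_single, one_smul]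

theorem coboundLin_cobound (g : EvenGraph) : coboundLin g.cobound = 0 := by
  have hE : ∀ a ∈ Finset.range g.edges.length, coboundLin (g.edgeTerm a) =
      ∑ b ∈ Finset.range (g.edges.length - 1), (if Regular g.ve (g.edge a) then
        (-1 : ℝ) ^ (a + g.ve) • (g.contractEdge a).edgeTerm b else 0) +
      ∑ i ∈ Finset.range (numArcs g.ve), (if Regular g.ve (g.edge a) then
        (-1 : ℝ) ^ (a + g.ve) • (g.contractEdge a).arcTerm i else 0) := by
    intro a ha
    rw [coboundLin_edgeTerm]
    split_ifs
    · rw [cobound, length_contractEdge (Finset.mem_range.1 ha), smul_add, Finset.smul_sum,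
        Finset.smul_sum]
      rfl
    · simp
  have hA : ∀ i ∈ Finset.range (numArcs g.ve), coboundLin (g.arcTerm i) =
      ∑ a ∈ Finset.range g.edges.length, (-1 : ℝ) ^ i • (g.contractArcAt i).edgeTerm a +
      ∑ b ∈ Finset.range (numArcs (g.ve - 1)), (-1 : ℝ) ^ i • (g.contractArcAt i).arcTerm b := by
    intro i _
    rw [coboundLin_arcTerm, cobound, length_contractArcAt, smul_add, Finset.smul_sum,
      Finset.smul_sum]
    rfl
  rw [cobound, map_add, map_sum, map_sum, Finset.sum_congr rfl hE, Finset.sum_congr rfl hA,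
    Finset.sum_add_distrib, Finset.sum_add_distrib, sum_edgeTerm_edgeTerm, sum_arcTerm_arcTerm,
    zero_add, add_zero, Finset.sum_comm (s := Finset.range (numArcs g.ve)),
    ← Finset.sum_add_distrib]
  refine Finset.sum_eq_zero fun a ha => ?_
  rw [← Finset.sum_add_distrib]
  exact Finset.sum_eq_zero fun i hi =>
    g.edgeTerm_arcTerm_add (Finset.mem_range.1 ha) (Finset.mem_range.1 hi)

/-- The number of ends of an edge at a vertex. -/
def endCount (v : ℕ) (e : ℕ × ℕ) : ℕ := (if e.1 = v then 1 else 0) + (if e.2 = v then 1 else 0)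

theorem valence_eq (g : EvenGraph) (v : ℕ) : g.valence v = (g.edges.map (endCount v)).sum := rfl

/-- The graphs on which the coboundary is not set to zero. -/
def Good (g : EvenGraph) : Prop := g.IsValid ∧ ¬g.hasDoubleEdge ∧ ¬g.hasInternalLoop

theorem endCount_mergeEdge_self {i j : ℕ} (hij : i < j) (e : ℕ × ℕ) :
    endCount i (mergeEdge (i, j) e) = endCount i e + endCount j e := by
  have (x : ℕ) : mergeMap i j x = i ↔ x = i ∨ x = j := by
    rw [mergeMap_of_lt hij]
    split_ifs <;> omega
  simp only [endCount, mergeEdge, this]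
  split_ifs <;> omega

theorem endCount_mergeEdge_of_ne {i j v : ℕ} (hij : i < j) (hv : v ≠ i) (e : ℕ × ℕ) :
    endCount v (mergeEdge (i, j) e) = endCount (if v < j then v else v + 1) e := by
  have (x : ℕ) : mergeMap i j x = v ↔ x = (if v < j then v else v + 1) := by
    rw [mergeMap_of_lt hij]
    split_ifs <;> omega
  simp only [endCount, mergeEdge, this]

theorem IsValid.one_le_valence {g : EvenGraph} (hg : g.IsValid) {v : ℕ} (hv : v < g.nv) :
    1 ≤ g.valence v := by
  rcases Nat.lt_or_ge v g.ve with h | h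
  · exact hg.2.2.1 v h
  · exact (by norm_num : 1 ≤ 3).trans (hg.2.1 v h hv)

theorem isValid_merge {g : EvenGraph} (hg : g.IsValid) {i j c ve' vi' : ℕ} {R : List (ℕ × ℕ)}
    (hij : i < j) (hj : j < g.nv)
    (hc : (c = 1 ∧ g.ve ≤ j ∧ ve' = g.ve ∧ vi' = g.vi - 1) ∨
      (c = 0 ∧ j < g.ve ∧ ve' = g.ve - 1 ∧ vi' = g.vi))
    (hR : ∀ e ∈ R, e ∈ g.edges) (hE : ∀ e ∈ g.edges, e ∈ R ∨ e = (i, j) ∨ e = (j, i))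
    (hval : ∀ u, g.valence u = (if u = i ∨ u = j then c else 0) + (R.map (endCount u)).sum) :
    IsValid ⟨ve', vi', R.map (mergeEdge (i, j))⟩ := by
  have hnv : ve' + vi' = g.nv - 1 := by
    unfold nv at *
    omega
  have hself : (((R.map (mergeEdge (i, j))).map (endCount i)).sum) + 2 * c =
      g.valence i + g.valence j := by
    rw [hval, hval, if_pos (Or.inl rfl), if_pos (Or.inr rfl), List.map_map]
    rw [show endCount i ∘ mergeEdge (i, j) = fun e => endCount i e + endCount j e from
      funext fun e => endCount_mergeEdge_self hij e, List.sum_map_add]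
    omega
  have hne (v : ℕ) (hv : v ≠ i) : ((R.map (mergeEdge (i, j))).map (endCount v)).sum =
      g.valence (if v < j then v else v + 1) := by
    rw [hval, if_neg (by split_ifs <;> omega), List.map_map, zero_add]
    congr 1
    exact List.map_congr_left fun e _ => endCount_mergeEdge_of_ne hij hv e
  have hlt {x : ℕ} (hx : x < g.nv) : mergeMap i j x < ve' + vi' := by
    rw [hnv]
    exact mergeMap_lt hij.ne (hij.trans hj) hj hx
  refine ⟨?_, fun v h1 h2 => ?_, fun v h1 => ?_, fun a b ha hb => ?_⟩
  · simp only [List.mem_map]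
    rintro _ ⟨e, he, rfl⟩
    exact ⟨hlt (hg.1 e (hR e he)).1, hlt (hg.1 e (hR e he)).2⟩
  · simp only [nv] at h1 h2
    rw [valence_eq]
    by_cases hv : v = i
    · subst hv
      have := hg.2.1 v (by omega) (by omega)
      have := hg.2.1 j (by omega) hj
      dsimp only
      omega
    · dsimp only
      rw [hne v hv]
      exact hg.2.1 _ (by split_ifs <;> omega) (by split_ifs <;> omega)
  · rw [valence_eq]
    dsimp only at h1 ⊢
    by_cases hv : v = i
    · subst hv
      have h3 := hg.one_le_valence (hij.trans hj)
      have h4 := hg.one_le_valence hj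
      rcases hc with hc | hc
      · have := hg.2.1 j (by omega) hj
        omega
      · omega
    · rw [hne v hv]
      exact hg.one_le_valence (by split_ifs <;> omega)
  · simp only [nv] at ha hb
    have key := Relation.ReflTransGen.lift' (p := adj ⟨ve', vi', R.map (mergeEdge (i, j))⟩)
      (mergeMap i j) ?_ _ _ (hg.2.2.2 (if a < j then a else a + 1) (if b < j then b else b + 1)
        (by split_ifs <;> omega) (by split_ifs <;> omega))
    · have hs (x : ℕ) : mergeMap i j (if x < j then x else x + 1) = x := by
        rw [mergeMap_of_lt hij]
        split_ifs <;> omega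
      simpa only [Function.onFun, hs] using key
    · intro x y hxy
      have hm : mergeMap i j i = mergeMap i j j := (mergeMap_eq_iff hij.ne i j).2 (by simp)
      obtain ⟨e, he, hxy⟩ | ⟨hx, hy⟩ := hxy
      · obtain he | rfl | rfl := hE e he
        · refine Relation.ReflTransGen.single (Or.inl ⟨mergeEdge (i, j) e,
            List.mem_map_of_mem he, ?_⟩)
          obtain ⟨rfl, rfl⟩ | ⟨rfl, rfl⟩ := hxy
          · exact Or.inl ⟨rfl, rfl⟩
          · exact Or.inr ⟨rfl, rfl⟩
        all_goals
          obtain ⟨rfl, rfl⟩ | ⟨rfl, rfl⟩ := hxy <;> simp only [Function.onFun, hm] <;>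
          exact Relation.ReflTransGen.refl
      · refine Relation.ReflTransGen.single (Or.inr ?_)
        simp only [mergeMap_of_lt hij]
        constructor <;> split_ifs <;> omega

theorem mergeEdge_swap (p : ℕ × ℕ) : mergeEdge p.swap = mergeEdge p := by
  funext q
  simp only [mergeEdge, Prod.fst_swap, Prod.snd_swap, mergeMap_symm p.2 p.1]

theorem not_hasInternalLoop_merge {g : EvenGraph} (hg : ¬g.hasInternalLoop) {p : ℕ × ℕ}
    {ve' vi' : ℕ} {R : List (ℕ × ℕ)} (hp : p.1 ≠ p.2)
    (hve : ∀ x < g.ve, mergeMap p.1 p.2 x < ve') (hR : ∀ e ∈ R, e ∈ g.edges)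
    (hpar : ∀ e ∈ R, e = p ∨ e = p.swap → p.1 < g.ve ∧ p.2 < g.ve) :
    ¬hasInternalLoop ⟨ve', vi', R.map (mergeEdge p)⟩ := by
  rintro ⟨e', he', hl, hi⟩
  obtain ⟨e, he, rfl⟩ := List.mem_map.1 he'
  refine absurd (hve e.1 ?_) (not_lt.2 hi)
  obtain h | h | h := (mergeMap_eq_iff hp _ _).1 hl
  · by_contra hlt
    exact hg ⟨e, hR e he, h, not_lt.1 hlt⟩
  · have := hpar e he (Or.inl (Prod.ext h.1 h.2))
    omega
  · have := hpar e he (Or.inr (Prod.ext h.1 h.2))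
    omega

theorem edge_mem {g : EvenGraph} {a : ℕ} (ha : a < g.edges.length) : g.edge a ∈ g.edges := by
  rw [edge, List.getD_eq_getElem _ _ ha]
  exact List.getElem_mem ha

theorem isValid_contractEdge {g : EvenGraph} (hg : g.IsValid) {a : ℕ} (ha : a < g.edges.length)
    (hp : Regular g.ve (g.edge a)) : (g.contractEdge a).IsValid := by
  have hperm : (g.edge a :: g.edges.eraseIdx a).Perm g.edges := by
    rw [edge, List.getD_eq_getElem _ _ ha]
    exact List.getElem_cons_eraseIdx_perm ha
  have hval (u : ℕ) : g.valence u =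
      endCount u (g.edge a) + ((g.edges.eraseIdx a).map (endCount u)).sum := by
    rw [valence_eq, ← (hperm.map _).sum_eq, List.map_cons, List.sum_cons]
  have hlt := hg.1 _ (edge_mem ha)
  have hmem (e : ℕ × ℕ) (he : e ∈ g.edges) : e ∈ g.edges.eraseIdx a ∨ e = g.edge a := by
    rw [← hperm.mem_iff, List.mem_cons] at he
    exact he.symm
  have hR (e : ℕ × ℕ) (he : e ∈ g.edges.eraseIdx a) : e ∈ g.edges := List.mem_of_mem_eraseIdx he
  rw [contractEdge]
  generalize g.edge a = p at *
  obtain ⟨i, j⟩ := p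
  simp only [Regular] at *
  rcases hp.1.lt_or_gt with h | h
  · refine isValid_merge hg h hlt.2 (c := 1) (Or.inl ⟨rfl, by omega, rfl, rfl⟩) hR
      (fun e he => (hmem e he).imp_right Or.inl) fun u => ?_
    rw [hval]
    congr 1
    simp only [endCount]
    split_ifs <;> omega
  · rw [← mergeEdge_swap]
    refine isValid_merge hg h hlt.1 (c := 1) (Or.inl ⟨rfl, by omega, rfl, rfl⟩) hR
      (fun e he => (hmem e he).imp_right Or.inr) fun u => ?_
    rw [hval]
    congr 1
    simp only [endCount]
    split_ifs <;> omega

theorem isValid_contractArcAt {g : EvenGraph} (hg : g.IsValid) {i : ℕ} (hi : i < numArcs g.ve) :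
    (g.contractArcAt i).IsValid := by
  have h1 := arc_fst_ne_snd hi
  have h2 := arc_lt hi
  rw [contractArcAt]
  generalize arc g.ve i = p at *
  obtain ⟨i, j⟩ := p
  simp only at h1 h2
  have hval (u k l : ℕ) :
      g.valence u = (if u = k ∨ u = l then 0 else 0) + (g.edges.map (endCount u)).sum := by
    simp [valence_eq]
  rcases h1.lt_or_gt with h | h
  · exact isValid_merge hg h (by unfold nv; omega) (Or.inr ⟨rfl, by omega, rfl, rfl⟩)
      (fun e he => he) (fun e he => Or.inl he) fun u => hval u _ _
  · rw [← mergeEdge_swap]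
    exact isValid_merge hg h (by unfold nv; omega) (Or.inr ⟨rfl, by omega, rfl, rfl⟩)
      (fun e he => he) (fun e he => Or.inl he) fun u => hval u _ _

theorem not_hasInternalLoop_contractEdge {g : EvenGraph} (hg : g.Good) {a : ℕ}
    (ha : a < g.edges.length) (hp : Regular g.ve (g.edge a)) :
    ¬(g.contractEdge a).hasInternalLoop := by
  refine not_hasInternalLoop_merge hg.2.2 hp.1 (fun x hx => ?_)
    (fun e he => List.mem_of_mem_eraseIdx he) fun e he hpar => ?_
  · rwa [mergeMap_of_lt_max (by have := hp.2; omega)]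
  · obtain ⟨b, hb, hba, rfl⟩ := List.mem_eraseIdx_iff_getElem.1 he
    rw [edge, List.getD_eq_getElem _ _ ha] at hpar
    exact absurd ⟨⟨a, ha⟩, ⟨b, hb⟩, fun h => hba (congrArg Fin.val h).symm, hpar⟩ hg.2.1

theorem not_hasInternalLoop_contractArcAt {g : EvenGraph} (hg : ¬g.hasInternalLoop) {i : ℕ}
    (hi : i < numArcs g.ve) : ¬(g.contractArcAt i).hasInternalLoop :=
  not_hasInternalLoop_merge hg (arc_fst_ne_snd hi)
    (fun _ => (mergeMap_lt_iff_of_lt (arc_fst_ne_snd hi) (arc_lt hi).1 (arc_lt hi).2).2)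
    (fun _ he => he) fun _ _ _ => arc_lt hi

/-- The graph with prescribed edges. -/
def ofFn (ve vi : ℕ) {n : ℕ} (f : Fin n → ℕ × ℕ) : EvenGraph := ⟨ve, vi, List.ofFn f⟩

/-- The unordered pair of end-points of an edge. -/
def ends (e : ℕ × ℕ) : Sym2 ℕ := s(e.1, e.2)

theorem endCount_eq_of_ends {σ : ℕ → ℕ} (hσ : Function.Injective σ) {e e' : ℕ × ℕ}
    (h : ends e' = (ends e).map σ) (v : ℕ) : endCount (σ v) e' = endCount v e := by
  rw [ends, ends, Sym2.map_mk, Sym2.eq_iff] at h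
  obtain ⟨h1, h2⟩ | ⟨h1, h2⟩ := h <;> simp only [endCount, h1, h2, hσ.eq_iff]
  exact add_comm _ _

theorem valence_ofFn (ve vi : ℕ) {n : ℕ} (f : Fin n → ℕ × ℕ) (v : ℕ) :
    (ofFn ve vi f).valence v = ∑ a, endCount v (f a) := by
  rw [valence_eq, ofFn, List.map_ofFn, List.sum_ofFn]
  rfl

/-- An isomorphism of graphs, not necessarily compatible with the orientation of the circle. -/
structure IsIso (ve vi : ℕ) {n : ℕ} (f f' : Fin n → ℕ × ℕ) (σ : Equiv.Perm ℕ)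
    (τ : Equiv.Perm (Fin n)) : Prop where
  ext_iff : ∀ v, σ v < ve ↔ v < ve
  vertex_iff : ∀ v, σ v < ve + vi ↔ v < ve + vi
  ends_eq : ∀ a, ends (f' (τ a)) = (ends (f a)).map σ

namespace IsIso

variable {ve vi n : ℕ} {f f' : Fin n → ℕ × ℕ} {σ : Equiv.Perm ℕ} {τ : Equiv.Perm (Fin n)}

theorem symm (h : IsIso ve vi f f' σ τ) : IsIso ve vi f' f σ.symm τ.symm where
  ext_iff v := by rw [← h.ext_iff, Equiv.apply_symm_apply]
  vertex_iff v := by rw [← h.vertex_iff, Equiv.apply_symm_apply]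
  ends_eq a := by
    have := h.ends_eq (τ.symm a)
    rw [Equiv.apply_symm_apply] at this
    rw [this, Sym2.map_map]
    simp

theorem valence (h : IsIso ve vi f f' σ τ) (v : ℕ) :
    (ofFn ve vi f').valence (σ v) = (ofFn ve vi f).valence v := by
  rw [valence_ofFn, valence_ofFn, ← Equiv.sum_comp τ]
  exact Finset.sum_congr rfl fun a _ => endCount_eq_of_ends σ.injective (h.ends_eq a) v

theorem adj (h : IsIso ve vi f f' σ τ) {x y : ℕ} (hxy : (ofFn ve vi f).adj x y) :
    (ofFn ve vi f').adj (σ x) (σ y) := by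
  obtain ⟨e, he, hxy⟩ | ⟨hx, hy⟩ := hxy
  · obtain ⟨a, rfl⟩ := List.mem_ofFn.1 he
    refine Or.inl ⟨f' (τ a), List.mem_ofFn.2 ⟨_, rfl⟩, ?_⟩
    have := h.ends_eq a
    rw [ends, ends, Sym2.map_mk, Sym2.eq_iff] at this
    obtain ⟨rfl, rfl⟩ | ⟨rfl, rfl⟩ := hxy
    · exact this
    · exact this.symm
  · exact Or.inr ⟨(h.ext_iff x).2 hx, (h.ext_iff y).2 hy⟩

theorem isValid (h : IsIso ve vi f f' σ τ) (hg : (ofFn ve vi f).IsValid) :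
    (ofFn ve vi f').IsValid := by
  obtain ⟨h1, h2, h3, h4⟩ := hg
  refine ⟨fun e he => ?_, fun v hv hv' => ?_, fun v hv => ?_, fun x y hx hy => ?_⟩
  · obtain ⟨a, rfl⟩ := List.mem_ofFn.1 he
    have h5 := h.ends_eq (τ.symm a)
    have h6 := h1 (f (τ.symm a)) (List.mem_ofFn.2 ⟨_, rfl⟩)
    change _ < ve + vi ∧ _ < ve + vi at h6
    change _ < ve + vi ∧ _ < ve + vi
    rw [Equiv.apply_symm_apply, ends, ends, Sym2.map_mk, Sym2.eq_iff] at h5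
    obtain ⟨h7, h8⟩ | ⟨h7, h8⟩ := h5 <;> simp only [h7, h8, h.vertex_iff]
    · exact h6
    · exact h6.symm
  · obtain ⟨w, rfl⟩ := σ.surjective v
    rw [h.valence]
    exact h2 w (not_lt.1 fun hw => absurd ((h.ext_iff w).2 hw) (not_lt.2 hv))
      ((h.vertex_iff w).1 hv')
  · obtain ⟨w, rfl⟩ := σ.surjective v
    rw [h.valence]
    exact h3 w ((h.ext_iff w).1 hv)
  · obtain ⟨x, rfl⟩ := σ.surjective x
    obtain ⟨y, rfl⟩ := σ.surjective y
    exact Relation.ReflTransGen.lift σ (fun _ _ => h.adj) _ _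
      (h4 x y ((h.vertex_iff x).1 hx) ((h.vertex_iff y).1 hy))

end IsIso

theorem hasDoubleEdge_ofFn {ve vi n : ℕ} {f : Fin n → ℕ × ℕ} :
    (ofFn ve vi f).hasDoubleEdge ↔ ∃ a b, a ≠ b ∧ ends (f b) = ends (f a) := by
  have hn : n = (ofFn ve vi f).edges.length := (List.length_ofFn).symm
  have hget (a) : (ofFn ve vi f).edges.get a = f (Fin.cast hn.symm a) := List.get_ofFn f a
  simp only [hasDoubleEdge, hget, ends, Sym2.eq_iff, Prod.ext_iff, Prod.fst_swap, Prod.snd_swap]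
  constructor
  · rintro ⟨a, b, hab, h⟩
    exact ⟨Fin.cast hn.symm a, Fin.cast hn.symm b, by simpa using hab, h⟩
  · rintro ⟨a, b, hab, h⟩
    exact ⟨Fin.cast hn a, Fin.cast hn b, by simpa using hab, h⟩

theorem hasInternalLoop_ofFn {ve vi n : ℕ} {f : Fin n → ℕ × ℕ} :
    (ofFn ve vi f).hasInternalLoop ↔ ∃ a v, ve ≤ v ∧ ends (f a) = s(v, v) := by
  simp only [hasInternalLoop, ofFn, List.mem_ofFn, ends, Sym2.eq_iff]
  constructor
  · rintro ⟨_, ⟨a, rfl⟩, h1, h2⟩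
    exact ⟨a, _, h2, Or.inl ⟨rfl, h1.symm⟩⟩
  · rintro ⟨a, v, hv, h⟩
    exact ⟨_, ⟨a, rfl⟩, by omega, by omega⟩

namespace IsIso

variable {ve vi n : ℕ} {f f' : Fin n → ℕ × ℕ} {σ : Equiv.Perm ℕ} {τ : Equiv.Perm (Fin n)}

theorem hasDoubleEdge (h : IsIso ve vi f f' σ τ) (hg : (ofFn ve vi f).hasDoubleEdge) :
    (ofFn ve vi f').hasDoubleEdge := by
  obtain ⟨a, b, hab, he⟩ := hasDoubleEdge_ofFn.1 hg
  exact hasDoubleEdge_ofFn.2 ⟨τ a, τ b, τ.injective.ne hab, by rw [h.ends_eq, h.ends_eq, he]⟩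

theorem hasInternalLoop (h : IsIso ve vi f f' σ τ) (hg : (ofFn ve vi f).hasInternalLoop) :
    (ofFn ve vi f').hasInternalLoop := by
  obtain ⟨a, v, hv, he⟩ := hasInternalLoop_ofFn.1 hg
  refine hasInternalLoop_ofFn.2 ⟨τ a, σ v, ?_, by rw [h.ends_eq, he, Sym2.map_mk]⟩
  rw [← not_lt, h.ext_iff]
  exact not_lt.2 hv

theorem good_iff (h : IsIso ve vi f f' σ τ) : (ofFn ve vi f).Good ↔ (ofFn ve vi f').Good :=
  and_congr ⟨h.isValid, h.symm.isValid⟩ <|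
    and_congr (not_congr ⟨h.hasDoubleEdge, h.symm.hasDoubleEdge⟩)
      (not_congr ⟨h.hasInternalLoop, h.symm.hasInternalLoop⟩)

end IsIso

/-- The class of a graph in `De`. -/
noncomputable def cls (g : EvenGraph) : De := evenRelations.mkQ (Finsupp.single g 1)

/-- A relabelling of the vertices which rotates the external ones by `r` and permutes the
internal ones. -/
structure IsRelabelling (ve vi r : ℕ) (σ : ℕ → ℕ) : Prop where
  ext : ∀ v < ve, σ v = (v + r) % ve
  int : ∀ v, ve ≤ v → v < ve + vi → ve ≤ σ v ∧ σ v < ve + vi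
  inj : Set.InjOn σ (Set.Iio (ve + vi))

namespace IsRelabelling

variable {ve vi r : ℕ} {σ : ℕ → ℕ}

theorem lt_ext (h : IsRelabelling ve vi r σ) {v : ℕ} (hv : v < ve) : σ v < ve := by
  rw [h.ext v hv]
  exact Nat.mod_lt _ (by omega)

theorem lt (h : IsRelabelling ve vi r σ) {v : ℕ} (hv : v < ve + vi) : σ v < ve + vi := by
  rcases Nat.lt_or_ge v ve with hv' | hv'
  · exact (h.lt_ext hv').trans_le (Nat.le_add_right _ _)
  · exact (h.int v hv' hv).2

theorem lt_ext_iff (h : IsRelabelling ve vi r σ) {v : ℕ} (hv : v < ve + vi) :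
    σ v < ve ↔ v < ve :=
  ⟨fun h' => not_le.1 fun h'' => absurd (h.int v h'' hv).1 (not_le.2 h'), h.lt_ext⟩

end IsRelabelling

theorem sign_finRotate_pow (ve r : ℕ) :
    ((Equiv.Perm.sign (finRotate ve ^ r) : ℤ) : ℝ) = (-1) ^ ((ve - 1) * r) := by
  rw [map_pow, sign_finRotate, ← pow_mul]
  push_cast
  ring

theorem cls_eq_of_evenRel {g g' : EvenGraph} {ε : ℝ} (h : EvenRel g g' ε) :
    cls g = ε • cls g' := by
  rw [cls, cls, ← map_smul, ← sub_eq_zero, ← map_sub, Submodule.mkQ_apply,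
    Submodule.Quotient.mk_eq_zero]
  exact Submodule.subset_span (Or.inr ⟨g, g', ε, h, rfl⟩)

theorem cls_ofFn_eq {ve vi n r : ℕ} {f f' : Fin n → ℕ × ℕ} {σ : ℕ → ℕ} {τ : Equiv.Perm (Fin n)}
    (hσ : IsRelabelling ve vi r σ) (hf : ∀ a, (f a).1 < ve + vi ∧ (f a).2 < ve + vi)
    (hends : ∀ a, ends (f' (τ a)) = (ends (f a)).map σ) :
    cls (ofFn ve vi f) =
      ((-1 : ℝ) ^ ((ve - 1) * r) * ((Equiv.Perm.sign τ : ℤ) : ℝ)) • cls (ofFn ve vi f') := by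
  let π' : Fin vi → Fin vi := fun x => ⟨σ (ve + x) - ve, by
    have := hσ.int (ve + x) (by omega) (by omega)
    omega⟩
  have hπ : Function.Injective π' := fun x y hxy => by
    have h1 := hσ.int (ve + x) (by omega) (by omega)
    have h2 := hσ.int (ve + y) (by omega) (by omega)
    have h3 : σ (ve + x) - ve = σ (ve + y) - ve := congrArg Fin.val hxy
    have := hσ.inj (show ve + (x : ℕ) < ve + vi by omega) (show ve + (y : ℕ) < ve + vi by omega)
      (by omega)
    exact Fin.ext (by omega)
  let π : Equiv.Perm (Fin vi) := Equiv.ofBijective π' (Finite.injective_iff_bijective.1 hπ)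
  have hperm {v : ℕ} (hv : v < ve + vi) : permVertexE ve vi π r v = σ v := by
    unfold permVertexE
    split_ifs with h1 h2
    · exact (hσ.ext v h1).symm
    · have h3 := hσ.int v (by omega) hv
      change ve + (σ (ve + (v - ve)) - ve) = σ v
      rw [show ve + (v - ve) = v by omega]
      omega
    · omega
  have hn : (ofFn ve vi f).edges.length = n := List.length_ofFn
  have hn' : (ofFn ve vi f').edges.length = n := List.length_ofFn
  have hsw (a : Fin n) : ∃ sw : Bool, f' (τ a) =
      if sw then (σ (f a).2, σ (f a).1) else (σ (f a).1, σ (f a).2) := by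
    have h := hends a
    rw [ends, ends, Sym2.map_mk, Sym2.eq_iff] at h
    obtain h | h := h
    · exact ⟨false, Prod.ext h.1 h.2⟩
    · exact ⟨true, Prod.ext h.1 h.2⟩
  choose sw hsw using hsw
  refine cls_eq_of_evenRel ⟨rfl, rfl, π, r, hn'.trans hn.symm,
    (finCongr hn.symm).permCongr τ, fun a => sw (Fin.cast hn a), fun a => ?_, ?_⟩
  · have hget (a) : (ofFn ve vi f).edges.get a = f (Fin.cast hn a) := List.get_ofFn f a
    have hget' (a) : (ofFn ve vi f').edges.get a = f' (Fin.cast hn' a) := List.get_ofFn f' a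
    rw [hget, hget']
    have hfa := hf (Fin.cast hn a)
    change f' (τ (Fin.cast hn a)) = if _ then
      (permVertexE ve vi π r (f (Fin.cast hn a)).2, permVertexE ve vi π r (f (Fin.cast hn a)).1)
      else (permVertexE ve vi π r (f (Fin.cast hn a)).1, permVertexE ve vi π r (f (Fin.cast hn a)).2)
    rw [hperm hfa.1, hperm hfa.2, hsw]
  · rw [Equiv.Perm.sign_permCongr]
    congr 1
    exact (sign_finRotate_pow ve r).symm

theorem exists_perm_succAbove {n : ℕ} (τ : Equiv.Perm (Fin (n + 1))) (a : Fin (n + 1)) :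
    ∃ τ' : Equiv.Perm (Fin n), (∀ b, τ (a.succAbove b) = (τ a).succAbove (τ' b)) ∧
      Equiv.Perm.sign τ = (-1) ^ ((a : ℕ) + (τ a : ℕ)) * Equiv.Perm.sign τ' := by
  let ρ : Equiv.Perm (Fin (n + 1)) := (τ a).cycleRange * τ * a.cycleRange⁻¹
  obtain ⟨⟨p, τ'⟩, hρ⟩ := Equiv.Perm.decomposeFin.symm.surjective ρ
  have h0 : p = 0 := by
    rw [← Equiv.Perm.decomposeFin_symm_apply_zero p τ', hρ]
    have : a.cycleRange⁻¹ 0 = a := by rw [Equiv.Perm.inv_eq_iff_eq, Fin.cycleRange_self]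
    simp only [ρ, Equiv.Perm.mul_apply, this, Fin.cycleRange_self]
  subst h0
  have hs (b : Fin n) : ρ b.succ = (τ' b).succ := by
    rw [← hρ, Equiv.Perm.decomposeFin_symm_apply_succ, Equiv.swap_self, Equiv.refl_apply]
  refine ⟨τ', fun b => ?_, ?_⟩
  · refine (τ a).cycleRange.injective ?_
    rw [Fin.cycleRange_succAbove, ← hs, ← Fin.cycleRange_succAbove a b]
    simp [ρ]
  · have h1 : Equiv.Perm.sign ρ = Equiv.Perm.sign τ' := by
      rw [← hρ, Equiv.Perm.decomposeFin.symm_sign, if_pos rfl, one_mul]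
    have h2 : Equiv.Perm.sign ρ = (-1) ^ (τ a : ℕ) * Equiv.Perm.sign τ * (-1) ^ (a : ℕ) := by
      simp only [ρ, map_mul, map_inv, Fin.sign_cycleRange, Int.units_inv_eq_self]
    rw [← h1, h2, pow_add]
    generalize (-1 : ℤˣ) ^ (a : ℕ) = u
    generalize (-1 : ℤˣ) ^ (τ a : ℕ) = v
    generalize Equiv.Perm.sign τ = s
    decide +revert

theorem edge_ofFn {ve vi n : ℕ} (f : Fin n → ℕ × ℕ) (a : Fin n) : (ofFn ve vi f).edge a = f a := by
  simp [edge, ofFn]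

theorem eraseIdx_ofFn {α : Type*} {n : ℕ} (f : Fin (n + 1) → α) (a : Fin (n + 1)) :
    (List.ofFn f).eraseIdx a = List.ofFn (f ∘ a.succAbove) := by
  refine List.ext_getElem ?_ fun b h1 h2 => ?_
  · rw [List.length_eraseIdx_of_lt (by rw [List.length_ofFn]; exact a.isLt), List.length_ofFn,
      List.length_ofFn, Nat.add_sub_cancel]
  have hb : b < n := by rwa [List.length_ofFn] at h2
  have key : (a.succAbove ⟨b, hb⟩ : ℕ) = if b < a then b else b + 1 := by
    split_ifs with h
    · rw [Fin.succAbove_of_castSucc_lt _ _ h]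
      rfl
    · rw [Fin.succAbove_of_le_castSucc _ _ (not_lt.1 h)]
      rfl
  rw [List.getElem_eraseIdx]
  split_ifs at key ⊢ with h <;> simp only [List.getElem_ofFn, Function.comp_apply] <;>
    exact congrArg f (Fin.ext key.symm)

theorem contractEdge_ofFn {ve vi n : ℕ} (f : Fin (n + 1) → ℕ × ℕ) (a : Fin (n + 1)) :
    (ofFn ve vi f).contractEdge a =
      ofFn ve (vi - 1) fun b => mergeEdge (f a) (f (a.succAbove b)) := by
  rw [contractEdge, edge_ofFn]
  simp only [ofFn, eraseIdx_ofFn, List.map_ofFn]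
  rfl

theorem contractArcAt_ofFn {ve vi n : ℕ} (f : Fin n → ℕ × ℕ) (i : ℕ) :
    (ofFn ve vi f).contractArcAt i = ofFn (ve - 1) vi fun b => mergeEdge (arc ve i) (f b) := by
  simp only [contractArcAt, ofFn, List.map_ofFn]
  rfl

/-- The map induced by `σ` on the vertices left after merging the vertices `i` and `j`. -/
def inducedMap (σ : ℕ → ℕ) (i j y : ℕ) : ℕ :=
  mergeMap (σ i) (σ j) (σ (if y < max i j then y else y + 1))

theorem inducedMap_mergeMap {σ : ℕ → ℕ} {i j : ℕ} (hij : i ≠ j) (hσ : σ i ≠ σ j) (x : ℕ) :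
    inducedMap σ i j (mergeMap i j x) = mergeMap (σ i) (σ j) (σ x) := by
  have hm : mergeMap (σ i) (σ j) (σ i) = mergeMap (σ i) (σ j) (σ j) :=
    (mergeMap_eq_iff hσ _ _).2 (by simp)
  unfold inducedMap
  by_cases hx : x = max i j
  · have h1 : mergeMap i j x = min i j := by
      unfold mergeMap
      split_ifs <;> omega
    rw [h1, if_pos (by omega)]
    rcases hij.lt_or_gt with h | h
    · rw [hx, min_eq_left h.le, max_eq_right h.le, hm]
    · rw [hx, min_eq_right h.le, max_eq_left h.le, hm]
  · congr 2
    unfold mergeMap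
    split_ifs <;> omega

theorem injOn_inducedMap {σ : ℕ → ℕ} {i j N : ℕ} (hij : i ≠ j) (hi : i < N) (hj : j < N)
    (hσ : Set.InjOn σ (Set.Iio N)) : Set.InjOn (inducedMap σ i j) (Set.Iio (N - 1)) := by
  intro x hx y hy hxy
  simp only [Set.mem_Iio] at hx hy
  have hs {z : ℕ} (hz : z < N - 1) : (if z < max i j then z else z + 1) ∈ Set.Iio N := by
    simp only [Set.mem_Iio]
    split_ifs <;> omega
  obtain h | h | h := (mergeMap_eq_iff (hσ.ne hi hj hij) _ _).1 hxy
  · have := hσ (hs hx) (hs hy) h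
    split_ifs at this <;> omega
  all_goals
    have h1 := hσ (hs hx) (by assumption) h.1
    have h2 := hσ (hs hy) (by assumption) h.2
    split_ifs at h1 h2 <;> omega

theorem IsRelabelling.contractEdge {ve vi r : ℕ} {σ : ℕ → ℕ} (hσ : IsRelabelling ve vi r σ)
    {i j : ℕ} (hp : Regular ve (i, j)) (hi : i < ve + vi) (hj : j < ve + vi) :
    IsRelabelling ve (vi - 1) r (inducedMap σ i j) := by
  obtain ⟨hij, hext⟩ := hp
  simp only at hij hext
  have hvi : ve + (vi - 1) = ve + vi - 1 := by omega
  have hne : σ i ≠ σ j := hσ.inj.ne hi hj hij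
  have hmax : ve ≤ max (σ i) (σ j) := by
    by_contra h
    have := hσ.lt_ext_iff hi
    have := hσ.lt_ext_iff hj
    omega
  refine ⟨fun v hv => ?_, fun v h1 h2 => ?_, ?_⟩
  · unfold inducedMap
    rw [if_pos (by omega), ← hσ.ext v hv]
    have := hσ.lt_ext hv
    exact mergeMap_of_lt_max (by omega)
  · rw [hvi] at h2 ⊢
    refine ⟨?_, mergeMap_lt hne (hσ.lt hi) (hσ.lt hj) (hσ.lt (by split_ifs <;> omega))⟩
    unfold inducedMap
    by_cases hv : v < max i j
    · rw [if_pos hv]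
      have h3 := hσ.int v h1 (by omega)
      have h4 : v ∈ Set.Iio (ve + vi) := by simp only [Set.mem_Iio]; omega
      have h5 : σ v = σ i → v = i := hσ.inj h4 hi
      have h6 : σ v = σ j → v = j := hσ.inj h4 hj
      have := hσ.lt_ext_iff hi
      have := hσ.lt_ext_iff hj
      unfold mergeMap
      split_ifs <;> omega
    · rw [if_neg hv]
      have h3 := hσ.int (v + 1) (by omega) (by omega)
      have h4 : v + 1 ∈ Set.Iio (ve + vi) := by simp only [Set.mem_Iio]; omega
      have h5 : σ (v + 1) = σ i → v + 1 = i := hσ.inj h4 hi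
      have h6 : σ (v + 1) = σ j → v + 1 = j := hσ.inj h4 hj
      unfold mergeMap
      split_ifs <;> omega
  · rw [hvi]
    exact injOn_inducedMap hij hi hj hσ.inj

theorem add_mod_of_lt_of_le {N x r : ℕ} (hx : x < N) (hr : r ≤ N) :
    (x + r) % N = if x + r < N then x + r else x + r - N := by
  split_ifs with h
  · exact Nat.mod_eq_of_lt h
  · rw [Nat.mod_eq_sub_mod (not_lt.1 h), Nat.mod_eq_of_lt (by omega)]

theorem mergeMap_arc_rotate {m i r y : ℕ} (hi : i < m + 2) (hr : r < m + 2) (hy : y < m + 1) :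
    mergeMap ((i + r) % (m + 2)) (((i + 1) % (m + 2) + r) % (m + 2))
      (((if y < max i ((i + 1) % (m + 2)) then y else y + 1) + r) % (m + 2)) =
      (y + if i + r < m + 2 then r else r - 1) % (m + 1) := by
  have h1 := add_mod_of_lt_of_le hi (show 1 ≤ m + 2 by omega)
  rw [h1, add_mod_of_lt_of_le hi hr.le,
    add_mod_of_lt_of_le (show (if i + 1 < m + 2 then i + 1 else i + 1 - (m + 2)) < m + 2 by
      split_ifs <;> omega) hr.le,
    add_mod_of_lt_of_le (show (if y < max i (if i + 1 < m + 2 then i + 1 else i + 1 - (m + 2))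
      then y else y + 1) < m + 2 by split_ifs <;> omega) hr.le,
    add_mod_of_lt_of_le hy (show (if i + r < m + 2 then r else r - 1) ≤ m + 1 by
      split_ifs <;> omega)]
  unfold mergeMap
  rcases Nat.lt_or_ge (i + 1) (m + 2) with h2 | h2 <;>
    rcases Nat.lt_or_ge (i + r) (m + 2) with h3 | h3 <;>
    simp only [h2, h3, if_true, if_false, not_lt.2] <;> grind

theorem IsRelabelling.contractArcAt {m vi r : ℕ} {σ : ℕ → ℕ} (hσ : IsRelabelling (m + 2) vi r σ)
    (hr : r < m + 2) {i : ℕ} (hi : i < m + 2) :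
    IsRelabelling (m + 1) vi (if i + r < m + 2 then r else r - 1)
      (inducedMap σ (arc (m + 2) i).1 (arc (m + 2) i).2) := by
  have hi' : i < numArcs (m + 2) := by rwa [numArcs, if_pos (by omega)]
  have hij := arc_fst_ne_snd hi'
  have hlt := arc_lt hi'
  have hlt' : (arc (m + 2) i).1 < m + 2 + vi ∧ (arc (m + 2) i).2 < m + 2 + vi :=
    ⟨by omega, by omega⟩
  have hne : σ (arc (m + 2) i).1 ≠ σ (arc (m + 2) i).2 := hσ.inj.ne hlt'.1 hlt'.2 hij
  have hvi : m + 1 + vi = m + 2 + vi - 1 := by omega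
  refine ⟨fun v hv => ?_, fun v h1 h2 => ?_, ?_⟩
  · unfold inducedMap
    rw [hσ.ext _ hlt.1, hσ.ext _ hlt.2, hσ.ext _ (by split_ifs <;> omega)]
    exact mergeMap_arc_rotate hi hr hv
  · rw [hvi] at h2 ⊢
    have h3 := hσ.lt_ext hlt.1
    have h4 := hσ.lt_ext hlt.2
    have h5 := hσ.int (v + 1) (by omega) (by omega)
    have : inducedMap σ (arc (m + 2) i).1 (arc (m + 2) i).2 v = σ (v + 1) - 1 := by
      unfold inducedMap
      rw [if_neg (by omega), mergeMap, if_neg (by omega), if_pos (by omega)]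
    omega
  · rw [hvi]
    exact injOn_inducedMap hij hlt'.1 hlt'.2 hσ.inj

theorem ends_mergeEdge (p q : ℕ × ℕ) : ends (mergeEdge p q) = (ends q).map (mergeMap p.1 p.2) := rfl

theorem mergeEdge_eq_of_ends {p : ℕ × ℕ} {i j : ℕ} (h : ends p = s(i, j)) :
    mergeEdge p = mergeEdge (i, j) := by
  rw [ends, Sym2.eq_iff] at h
  obtain ⟨h1, h2⟩ | ⟨h1, h2⟩ := h
  · congr 1
    exact Prod.ext h1 h2
  · rw [← mergeEdge_swap]
    congr 1
    exact Prod.ext h2 h1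

theorem regular_iff_of_ends {ve i j : ℕ} {p : ℕ × ℕ} (h : ends p = s(i, j)) :
    Regular ve p ↔ Regular ve (i, j) := by
  rw [ends, Sym2.eq_iff] at h
  simp only [Regular]
  omega

section Compatibility

variable {ve vi n r : ℕ} {f f' : Fin n → ℕ × ℕ} {σ : ℕ → ℕ} {τ : Equiv.Perm (Fin n)}

theorem ends_mergeEdge_inducedMap
    (hends : ∀ a, ends (f' (τ a)) = (ends (f a)).map σ) {p p' : ℕ × ℕ} (hp : p.1 ≠ p.2)
    (hσp : σ p.1 ≠ σ p.2) (hp' : ends p' = s(σ p.1, σ p.2)) (b : Fin n) :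
    ends (mergeEdge p' (f' (τ b))) = (ends (mergeEdge p (f b))).map (inducedMap σ p.1 p.2) := by
  rw [mergeEdge_eq_of_ends hp', ends_mergeEdge, ends_mergeEdge, hends, Sym2.map_map, Sym2.map_map]
  congr 1
  funext x
  exact (inducedMap_mergeMap hp hσp x).symm

theorem mkQ_edgeTerm (hσ : IsRelabelling ve vi r σ)
    (hf : ∀ a, (f a).1 < ve + vi ∧ (f a).2 < ve + vi)
    (hends : ∀ a, ends (f' (τ a)) = (ends (f a)).map σ) (a : Fin n) :
    evenRelations.mkQ ((ofFn ve vi f).edgeTerm a) =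
      ((-1 : ℝ) ^ ((ve - 1) * r) * ((Equiv.Perm.sign τ : ℤ) : ℝ)) •
        evenRelations.mkQ ((ofFn ve vi f').edgeTerm (τ a)) := by
  obtain ⟨n, rfl⟩ : ∃ k, n = k + 1 := ⟨n - 1, by have := a.pos; omega⟩
  have ha : ends (f' (τ a)) = s(σ (f a).1, σ (f a).2) := hends a
  have hreg : Regular ve (f' (τ a)) ↔ Regular ve (f a) := by
    rw [regular_iff_of_ends ha, Regular, Regular, hσ.lt_ext_iff (hf a).1, hσ.lt_ext_iff (hf a).2,
      hσ.inj.ne_iff (hf a).1 (hf a).2]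
  rw [edgeTerm, edgeTerm, edge_ofFn, edge_ofFn]
  change evenRelations.mkQ (if Regular ve _ then (-1 : ℝ) ^ (a + ve) • _ else _) =
    _ • evenRelations.mkQ (if Regular ve _ then (-1 : ℝ) ^ (τ a + ve) • _ else _)
  rw [hreg]
  split_ifs with hp
  swap
  · simp
  obtain ⟨τ', hτ', hsign⟩ := exists_perm_succAbove τ a
  have hσp : σ (f a).1 ≠ σ (f a).2 := hσ.inj.ne (hf a).1 (hf a).2 hp.1
  have hvi : ve + (vi - 1) = ve + vi - 1 := by
    have := hp.2
    have := hf a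
    omega
  rw [map_smul, map_smul]
  change _ • cls _ = _ • _ • cls _
  rw [contractEdge_ofFn, contractEdge_ofFn, cls_ofFn_eq (τ := τ')
    (hσ.contractEdge hp (hf a).1 (hf a).2) (fun b => ?_) (fun b => ?_), smul_smul, smul_smul]
  · congr 1
    rw [hsign]
    push_cast
    have h : (-1 : ℝ) ^ ((τ a : ℕ) * 2) = 1 := by rw [pow_mul']; norm_num
    ring_nf
    rw [h, mul_one]
  · rw [hvi]
    exact ⟨mergeMap_lt hp.1 (hf a).1 (hf a).2 (hf _).1, mergeMap_lt hp.1 (hf a).1 (hf a).2 (hf _).2⟩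
  · rw [← hτ']
    exact ends_mergeEdge_inducedMap hends hp.1 hσp ha _

theorem mkQ_arcTerm {m : ℕ} (hσ : IsRelabelling (m + 2) vi r σ) (hr : r < m + 2)
    (hf : ∀ a, (f a).1 < m + 2 + vi ∧ (f a).2 < m + 2 + vi)
    (hends : ∀ a, ends (f' (τ a)) = (ends (f a)).map σ) {i : ℕ} (hi : i < m + 2) :
    evenRelations.mkQ ((ofFn (m + 2) vi f).arcTerm i) =
      ((-1 : ℝ) ^ ((m + 1) * r) * ((Equiv.Perm.sign τ : ℤ) : ℝ)) •
        evenRelations.mkQ ((ofFn (m + 2) vi f').arcTerm ((i + r) % (m + 2))) := by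
  have hi' : i < numArcs (m + 2) := by rwa [numArcs, if_pos (by omega)]
  have hij := arc_fst_ne_snd hi'
  have hlt := arc_lt hi'
  have hlt' : (arc (m + 2) i).1 < m + 2 + vi ∧ (arc (m + 2) i).2 < m + 2 + vi :=
    ⟨by omega, by omega⟩
  have hne : σ (arc (m + 2) i).1 ≠ σ (arc (m + 2) i).2 := hσ.inj.ne hlt'.1 hlt'.2 hij
  have harc : ends (arc (m + 2) ((i + r) % (m + 2))) =
      s(σ (arc (m + 2) i).1, σ (arc (m + 2) i).2) := by
    rw [hσ.ext _ hlt.1, hσ.ext _ hlt.2]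
    simp only [ends, arc, Nat.mod_add_mod, add_right_comm]
  have hvi : m + 1 + vi = m + 2 + vi - 1 := by omega
  rw [arcTerm, arcTerm, map_smul, map_smul]
  change _ • cls _ = _ • _ • cls _
  rw [contractArcAt_ofFn, contractArcAt_ofFn, show m + 2 - 1 = m + 1 from rfl,
    cls_ofFn_eq (τ := τ) (f' := fun b => mergeEdge (arc (m + 2) ((i + r) % (m + 2))) (f' b))
      (hσ.contractArcAt hr hi) (fun b => ?_)
      (fun b => ends_mergeEdge_inducedMap hends hij hne harc b), smul_smul, smul_smul]
  · congr 1
    rw [← mul_assoc, mul_right_comm (_ ^ _ : ℝ) _ (_ ^ ((i + r) % (m + 2))),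
      ← pow_add, ← pow_add, Nat.add_sub_cancel,
      add_mod_of_lt_of_le hi hr.le]
    congr 1
    split_ifs with h
    · rw [show (m + 1) * r + (i + r) = i + m * r + 2 * r by ring, pow_add _ _ (2 * r), pow_mul]
      norm_num
    · obtain ⟨s, rfl⟩ : ∃ s, r = s + 1 := ⟨r - 1, by omega⟩
      obtain ⟨j, hj⟩ : ∃ j, i + s = j + (m + 1) := ⟨i + s - (m + 1), by omega⟩
      rw [show i + (s + 1) - (m + 2) = j by omega, Nat.add_sub_cancel,
        show (m + 1) * (s + 1) + j = i + m * s + 2 * s by linarith, pow_add _ _ (2 * s), pow_mul]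
      norm_num
  · rw [hvi]
    exact ⟨mergeMap_lt hij hlt'.1 hlt'.2 (hf _).1, mergeMap_lt hij hlt'.1 hlt'.2 (hf _).2⟩

theorem neg_one_pow_pred_mul_mod (ve r : ℕ) :
    (-1 : ℝ) ^ ((ve - 1) * r) = (-1) ^ ((ve - 1) * (r % ve)) := by
  have h : Even ((ve - 1) * (ve * (r / ve))) := by
    rw [← mul_assoc, mul_comm (ve - 1)]
    exact (Nat.even_mul_pred_self ve).mul_right _
  conv_lhs => rw [← Nat.mod_add_div r ve, mul_add, pow_add, h.neg_one_pow, mul_one]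

theorem mkQ_sum_arcTerm (hσ : IsRelabelling ve vi r σ)
    (hf : ∀ a, (f a).1 < ve + vi ∧ (f a).2 < ve + vi)
    (hends : ∀ a, ends (f' (τ a)) = (ends (f a)).map σ) :
    evenRelations.mkQ (∑ i ∈ Finset.range (numArcs ve), (ofFn ve vi f).arcTerm i) =
      ((-1 : ℝ) ^ ((ve - 1) * r) * ((Equiv.Perm.sign τ : ℤ) : ℝ)) •
        evenRelations.mkQ (∑ i ∈ Finset.range (numArcs ve), (ofFn ve vi f').arcTerm i) := by
  by_cases hve : 2 ≤ ve
  swap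
  · simp [numArcs, hve]
  obtain ⟨m, rfl⟩ : ∃ m, ve = m + 2 := ⟨ve - 2, by omega⟩
  have hr : r % (m + 2) < m + 2 := Nat.mod_lt _ (by omega)
  have hσ' : IsRelabelling (m + 2) vi (r % (m + 2)) σ :=
    ⟨fun v hv => by rw [hσ.ext v hv, Nat.add_mod_mod], hσ.int, hσ.inj⟩
  rw [numArcs, if_pos hve, map_sum, map_sum, Finset.smul_sum, neg_one_pow_pred_mul_mod]
  generalize r % (m + 2) = s at *
  refine Finset.sum_nbij' (fun i => (i + s) % (m + 2)) (fun i => (i + (m + 2 - s)) % (m + 2))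
    ?_ ?_ ?_ ?_ fun i hi => mkQ_arcTerm hσ' hr hf hends (Finset.mem_range.1 hi)
  · exact fun i _ => Finset.mem_range.2 (Nat.mod_lt _ (by omega))
  · exact fun i _ => Finset.mem_range.2 (Nat.mod_lt _ (by omega))
  · intro i hi
    rw [Nat.mod_add_mod, show i + s + (m + 2 - s) = i + (m + 2) by omega, Nat.add_mod_right,
      Nat.mod_eq_of_lt (Finset.mem_range.1 hi)]
  · intro i hi
    rw [Nat.mod_add_mod, show i + (m + 2 - s) + s = i + (m + 2) by omega, Nat.add_mod_right,
      Nat.mod_eq_of_lt (Finset.mem_range.1 hi)]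

theorem mkQ_cobound_ofFn (hσ : IsRelabelling ve vi r σ)
    (hf : ∀ a, (f a).1 < ve + vi ∧ (f a).2 < ve + vi)
    (hends : ∀ a, ends (f' (τ a)) = (ends (f a)).map σ) :
    evenRelations.mkQ (ofFn ve vi f).cobound =
      ((-1 : ℝ) ^ ((ve - 1) * r) * ((Equiv.Perm.sign τ : ℤ) : ℝ)) •
        evenRelations.mkQ (ofFn ve vi f').cobound := by
  have hn (h : Fin n → ℕ × ℕ) : (ofFn ve vi h).edges.length = n := List.length_ofFn
  rw [cobound, cobound, map_add, map_add, smul_add, hn, hn]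
  congr 1
  · rw [map_sum, map_sum, Finset.sum_range, Finset.sum_range, Finset.smul_sum,
      ← Equiv.sum_comp τ fun a : Fin n => _ • evenRelations.mkQ ((ofFn ve vi f').edgeTerm a)]
    exact Finset.sum_congr rfl fun a _ => mkQ_edgeTerm hσ hf hends a
  · exact mkQ_sum_arcTerm hσ hf hends

end Compatibility

theorem isRelabelling_permVertexE (ve vi : ℕ) (π : Equiv.Perm (Fin vi)) (r : ℕ) :
    IsRelabelling ve vi r (permVertexE ve vi π r) := by
  have hext (v : ℕ) (hv : v < ve) : permVertexE ve vi π r v = (v + r) % ve := if_pos hv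
  have hσint (v : ℕ) (hv : ve ≤ v) (hv' : v - ve < vi) :
      permVertexE ve vi π r v = ve + π ⟨v - ve, hv'⟩ := by
    rw [permVertexE, if_neg (not_lt.2 hv), dif_pos hv']
  have hlt (v : ℕ) (hv : v < ve) : permVertexE ve vi π r v < ve := by
    rw [hext v hv]
    exact Nat.mod_lt _ (by omega)
  refine ⟨hext, fun v hv hv' => ?_, fun x hx y hy hxy => ?_⟩
  · rw [hσint v hv (by omega)]
    omega
  · simp only [Set.mem_Iio] at hx hy
    rcases Nat.lt_or_ge x ve with h1 | h1 <;> rcases Nat.lt_or_ge y ve with h2 | h2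
    · rw [hext x h1, hext y h2] at hxy
      have : x ≡ y [MOD ve] := Nat.ModEq.add_right_cancel' r hxy
      exact this.eq_of_lt_of_lt h1 h2
    · have := hlt x h1
      rw [hxy, hσint y h2 (by omega)] at this
      omega
    · have := hlt y h2
      rw [← hxy, hσint x h1 (by omega)] at this
      omega
    · rw [hσint x h1 (by omega), hσint y h2 (by omega), add_right_inj, Fin.val_inj, π.apply_eq_iff_eq,
        Fin.mk.injEq] at hxy
      omega

theorem permVertexE_of_le {ve vi v : ℕ} (π : Equiv.Perm (Fin vi)) (r : ℕ) (hv : ve + vi ≤ v) :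
    permVertexE ve vi π r v = v := by
  rw [permVertexE, if_neg (by omega), dif_neg (by omega)]

theorem permVertexE_lt_iff {ve vi : ℕ} (π : Equiv.Perm (Fin vi)) (r v : ℕ) :
    permVertexE ve vi π r v < ve + vi ↔ v < ve + vi := by
  refine ⟨fun h => ?_, fun h => (isRelabelling_permVertexE ve vi π r).lt h⟩
  by_contra h'
  rw [permVertexE_of_le π r (not_lt.1 h')] at h
  exact h' h

theorem permVertexE_bijective (ve vi : ℕ) (π : Equiv.Perm (Fin vi)) (r : ℕ) :
    Function.Bijective (permVertexE ve vi π r) := by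
  have hσ := isRelabelling_permVertexE ve vi π r
  refine ⟨fun x y hxy => ?_, fun y => ?_⟩
  · have h := permVertexE_lt_iff (ve := ve) π r x
    rw [hxy, permVertexE_lt_iff] at h
    by_cases hx : x < ve + vi
    · exact hσ.inj hx (h.2 hx) hxy
    · rwa [permVertexE_of_le π r (not_lt.1 hx),
        permVertexE_of_le π r (not_lt.1 fun hy => hx (h.1 hy))] at hxy
  · by_cases hy : y < ve + vi
    · obtain ⟨x, -, hx⟩ := Finset.surjOn_of_injOn_of_card_le (s := Finset.range (ve + vi))
        (t := Finset.range (ve + vi)) (permVertexE ve vi π r)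
        (fun x hx => by simpa using hσ.lt (by simpa using hx)) (by simpa using hσ.inj) le_rfl
        (show y ∈ (Finset.range (ve + vi) : Set ℕ) by simpa using hy)
      exact ⟨x, hx⟩
    · exact ⟨y, permVertexE_of_le π r (not_lt.1 hy)⟩

theorem exists_ofFn_eq {g : EvenGraph} {n : ℕ} (h : g.edges.length = n) :
    ∃ f : Fin n → ℕ × ℕ, g = ofFn g.ve g.vi f ∧ ∀ a, g.edges.get a = f (Fin.cast h a) := by
  subst h
  refine ⟨g.edges.get, ?_, fun a => rfl⟩
  rw [ofFn, List.ofFn_get]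

theorem exists_of_evenRel {g g' : EvenGraph} {ε : ℝ} (h : EvenRel g g' ε) :
    ∃ (n : ℕ) (f f' : Fin n → ℕ × ℕ) (π : Equiv.Perm (Fin g.vi)) (r : ℕ)
      (τ : Equiv.Perm (Fin n)), g = ofFn g.ve g.vi f ∧ g' = ofFn g.ve g.vi f' ∧
      (∀ a, ends (f' (τ a)) = (ends (f a)).map (permVertexE g.ve g.vi π r)) ∧
      ε = (-1 : ℝ) ^ ((g.ve - 1) * r) * ((Equiv.Perm.sign τ : ℤ) : ℝ) := by
  obtain ⟨hve, hvi, π, r, hl, τ, sw, hrel, hε⟩ := h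
  obtain ⟨f, hg, hf⟩ := exists_ofFn_eq (g := g) rfl
  obtain ⟨f', hg', hf'⟩ := exists_ofFn_eq hl
  refine ⟨_, f, f', π, r, τ, hg, by rw [← hve, ← hvi]; exact hg', fun a => ?_, ?_⟩
  · have h := hrel a
    rw [hf', hf] at h
    change f' (τ a) = if sw a then
      (permVertexE g.ve g.vi π r (f a).2, permVertexE g.ve g.vi π r (f a).1)
      else (permVertexE g.ve g.vi π r (f a).1, permVertexE g.ve g.vi π r (f a).2) at h
    rw [h]
    split_ifs
    · exact Sym2.eq_swap
    · rfl
  · rw [hε, sign_finRotate_pow]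

theorem deltaGenE_eq (g : EvenGraph) : deltaGenE g = if g.Good then g.cobound else 0 := by
  by_cases hg : g.Good
  · rw [if_pos hg, deltaGenE_of_good hg]
  · rw [if_neg hg, deltaGenE]
    exact if_neg hg

theorem mkQ_deltaGenE_of_evenRel {g g' : EvenGraph} {ε : ℝ} (h : EvenRel g g' ε) :
    evenRelations.mkQ (deltaGenE g) = ε • evenRelations.mkQ (deltaGenE g') := by
  obtain ⟨n, f, f', π, r, τ, hg, hg', hends, rfl⟩ := exists_of_evenRel h
  have hσ := isRelabelling_permVertexE g.ve g.vi π r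
  have hiso : IsIso g.ve g.vi f f' (Equiv.ofBijective _ (permVertexE_bijective g.ve g.vi π r)) τ :=
    { ext_iff := fun v => by
        rw [Equiv.ofBijective_apply]
        by_cases hv : v < g.ve + g.vi
        · exact hσ.lt_ext_iff hv
        · rw [permVertexE_of_le π r (not_lt.1 hv)]
      vertex_iff := permVertexE_lt_iff π r
      ends_eq := hends }
  have hgood := hiso.good_iff
  rw [← hg, ← hg'] at hgood
  rw [deltaGenE_eq, deltaGenE_eq, hgood]
  split_ifs with hg1
  · have hf (a : Fin n) : (f a).1 < g.ve + g.vi ∧ (f a).2 < g.ve + g.vi := by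
      refine (hgood.2 hg1).1.1 (f a) ?_
      rw [hg]
      exact List.mem_ofFn.2 ⟨a, rfl⟩
    rw [hg']
    conv_lhs => rw [hg]
    exact mkQ_cobound_ofFn hσ hf hends
  · simp

theorem mkQ_cobound_of_hasDoubleEdge {g : EvenGraph} (hg : g.IsValid) (hd : g.hasDoubleEdge) :
    evenRelations.mkQ g.cobound = 0 := by
  obtain ⟨f, hgf, -⟩ := exists_ofFn_eq (g := g) rfl
  rw [hgf] at hd
  obtain ⟨a, b, hab, he⟩ := hasDoubleEdge_ofFn.1 hd
  have hσ : IsRelabelling g.ve g.vi 0 id :=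
    ⟨fun v hv => (Nat.mod_eq_of_lt hv).symm, fun v h1 h2 => ⟨h1, h2⟩, Set.injOn_id _⟩
  have hf (c) : (f c).1 < g.ve + g.vi ∧ (f c).2 < g.ve + g.vi := by
    refine hg.1 (f c) ?_
    rw [hgf]
    exact List.mem_ofFn.2 ⟨c, rfl⟩
  have hends (c) : ends (f (Equiv.swap a b c)) = (ends (f c)).map id := by
    rw [Sym2.map_id, id]
    rcases eq_or_ne c a with rfl | hca
    · rw [Equiv.swap_apply_left, he]
    rcases eq_or_ne c b with rfl | hcb
    · rw [Equiv.swap_apply_right, he]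
    · rw [Equiv.swap_apply_of_ne_of_ne hca hcb]
  have key := mkQ_cobound_ofFn hσ hf hends
  rw [← hgf, Equiv.Perm.sign_swap hab] at key
  simp only [mul_zero, pow_zero, one_mul, Units.val_neg, Units.val_one, Int.cast_neg, Int.cast_one,
    neg_smul, one_smul] at key
  have h2 : (2 : ℝ) • evenRelations.mkQ g.cobound = 0 := by
    rw [two_smul]
    exact add_eq_zero_iff_eq_neg.2 key
  exact (smul_eq_zero.1 h2).resolve_left two_ne_zero

theorem cls_eq_zero {g : EvenGraph} (hg : ¬g.Good) : cls g = 0 := by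
  rw [cls, Submodule.mkQ_apply, Submodule.Quotient.mk_eq_zero]
  refine Submodule.subset_span ?_
  by_cases h1 : g.IsValid
  · by_cases h2 : g.hasDoubleEdge
    · exact Or.inl (Or.inl (Or.inr ⟨g, h2, rfl⟩))
    · by_cases h3 : g.hasInternalLoop
      · exact Or.inl (Or.inr ⟨g, h3, rfl⟩)
      · exact absurd ⟨h1, h2, h3⟩ hg
  · exact Or.inl (Or.inl (Or.inl ⟨g, h1, rfl⟩))

theorem deltaFreeE_single (g : EvenGraph) (c : ℝ) :
    deltaFreeE (Finsupp.single g c) = c • deltaGenE g := by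
  simp [deltaFreeE]

theorem evenRelations_le_comap : evenRelations ≤ evenRelations.comap deltaFreeE := by
  refine Submodule.span_le.2 ?_
  rintro x (((⟨g, hg, rfl⟩ | ⟨g, hg, rfl⟩) | ⟨g, hg, rfl⟩) | ⟨g, g', ε, h, rfl⟩)
  · rw [SetLike.mem_coe, Submodule.mem_comap, deltaFreeE_single, deltaGenE_eq,
      if_neg fun h : g.Good => hg h.1, smul_zero]
    exact zero_mem _
  · rw [SetLike.mem_coe, Submodule.mem_comap, deltaFreeE_single, deltaGenE_eq,
      if_neg fun h : g.Good => h.2.1 hg, smul_zero]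
    exact zero_mem _
  · rw [SetLike.mem_coe, Submodule.mem_comap, deltaFreeE_single, deltaGenE_eq,
      if_neg fun h : g.Good => h.2.2 hg, smul_zero]
    exact zero_mem _
  · rw [SetLike.mem_coe, Submodule.mem_comap, map_sub, map_smul, deltaFreeE_single,
      deltaFreeE_single, one_smul, one_smul, ← Submodule.Quotient.mk_eq_zero,
      ← Submodule.mkQ_apply, map_sub, map_smul, mkQ_deltaGenE_of_evenRel h, sub_self]

/-- The coboundary operator on the even graph complex. -/
noncomputable def coboundDe : De →ₗ[ℝ] De :=
  evenRelations.mapQ evenRelations deltaFreeE evenRelations_le_comap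

theorem coboundDe_cls (g : EvenGraph) : coboundDe (cls g) = evenRelations.mkQ (deltaGenE g) := by
  rw [cls, coboundDe, Submodule.mkQ_apply, Submodule.mapQ_apply, deltaFreeE_single, one_smul]
  rfl

theorem coboundDe_cls_of_isValid {g : EvenGraph} (hg : g.IsValid) (hl : ¬g.hasInternalLoop) :
    coboundDe (cls g) = evenRelations.mkQ g.cobound := by
  rw [coboundDe_cls, deltaGenE_eq]
  split_ifs with h
  · rfl
  · rw [map_zero, mkQ_cobound_of_hasDoubleEdge hg (by_contra fun hd => h ⟨hg, hd, hl⟩)]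

theorem coboundDe_mkQ_cobound {g : EvenGraph} (hg : g.Good) :
    coboundDe (evenRelations.mkQ g.cobound) = evenRelations.mkQ (coboundLin g.cobound) := by
  rw [cobound]
  simp only [map_add, map_sum]
  congr 1
  · refine Finset.sum_congr rfl fun a ha => ?_
    rw [coboundLin_edgeTerm, edgeTerm]
    split_ifs with hp
    · have ha' := Finset.mem_range.1 ha
      rw [map_smul, map_smul, map_smul, ← coboundDe_cls_of_isValid
        (isValid_contractEdge hg.1 ha' hp) (not_hasInternalLoop_contractEdge hg ha' hp)]
      rfl
    · simp
  · refine Finset.sum_congr rfl fun i hi => ?_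
    have hi' := Finset.mem_range.1 hi
    rw [coboundLin_arcTerm, arcTerm, map_smul, map_smul, map_smul, ← coboundDe_cls_of_isValid
        (isValid_contractArcAt hg.1 hi') (not_hasInternalLoop_contractArcAt hg.2.2 hi')]
    rfl

theorem De.induction_on {P : De → Prop} (x : De) (h0 : P 0) (hadd : ∀ x y, P x → P y → P (x + y))
    (hsmul : ∀ (c : ℝ) g, P (c • cls g)) : P x := by
  obtain ⟨x, rfl⟩ := evenRelations.mkQ_surjective x
  induction x using Finsupp.induction_linear with
  | zero => rwa [map_zero]
  | add x y hx hy =>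
    rw [map_add]
    exact hadd _ _ hx hy
  | single g c =>
    rw [← mul_one c, ← smul_eq_mul, ← Finsupp.smul_single, map_smul]
    exact hsmul c g

theorem coboundDe_coboundDe (x : De) : coboundDe (coboundDe x) = 0 := by
  induction x using De.induction_on with
  | h0 => simp
  | hadd x y hx hy => rw [map_add, map_add, hx, hy, add_zero]
  | hsmul c g =>
    rw [map_smul, map_smul, coboundDe_cls, deltaGenE_eq]
    split_ifs with hg
    · rw [coboundDe_mkQ_cobound hg, coboundLin_cobound, map_zero, smul_zero]
    · simp

theorem cls_mem_evenPiece {g : EvenGraph} {k m : ℤ} (hk : g.ordZ = k) (hm : g.degZ = m) :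
    cls g ∈ evenPiece k m := by
  by_cases hg : g.IsValid
  · exact Submodule.subset_span ⟨g, hg, hk, hm, rfl⟩
  · rw [cls_eq_zero fun h => hg h.1]
    exact zero_mem _

theorem mkQ_cobound_mem_evenPiece {g : EvenGraph} (hg : g.IsValid) :
    evenRelations.mkQ g.cobound ∈ evenPiece g.ordZ (g.degZ + 1) := by
  rw [cobound, map_add, map_sum, map_sum]
  refine add_mem (Submodule.sum_mem _ fun a ha => ?_) (Submodule.sum_mem _ fun i hi => ?_)
  · have ha' := Finset.mem_range.1 ha
    rw [edgeTerm]
    split_ifs with hp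
    · have hvi : 1 ≤ g.vi := by
        have h1 := hg.1 _ (edge_mem ha')
        have h2 := hp.2
        unfold nv at h1
        omega
      have hl := length_contractEdge ha'
      have h1 : (g.contractEdge a).vi = g.vi - 1 := rfl
      have h2 : (g.contractEdge a).ve = g.ve := rfl
      rw [map_smul]
      refine Submodule.smul_mem _ _ (cls_mem_evenPiece ?_ ?_)
      · simp only [ordZ, numEdges, hl, h1]
        omega
      · simp only [degZ, numEdges, hl, h1, h2]
        omega
    · rw [map_zero]
      exact zero_mem _
  · have hve := arc_lt (Finset.mem_range.1 hi)
    have hl := length_contractArcAt g i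
    have h1 : (g.contractArcAt i).vi = g.vi := rfl
    have h2 : (g.contractArcAt i).ve = g.ve - 1 := rfl
    rw [arcTerm, map_smul]
    refine Submodule.smul_mem _ _ (cls_mem_evenPiece ?_ ?_)
    · simp only [ordZ, numEdges, hl, h1]
    · simp only [degZ, numEdges, hl, h1, h2]
      omega

theorem map_coboundDe_evenPiece_le (k m : ℤ) :
    (evenPiece k m).map coboundDe ≤ evenPiece k (m + 1) := by
  rw [evenPiece, Submodule.map_span_le]
  rintro _ ⟨g, hg, rfl, rfl, rfl⟩
  change coboundDe (cls g) ∈ _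
  rw [coboundDe_cls, deltaGenE_eq]
  split_ifs
  · exact mkQ_cobound_mem_evenPiece hg
  · rw [map_zero]
    exact zero_mem _

end EvenGraph

/-- The contraction operator `δ_e` is well defined on the quotient space
`D_e` (i.e. it descends through the sign relations on decorations, which is the existence
of the linear operator `δ` below together with the first property), it satisfies
`δ_e ∘ δ_e = 0`, and it maps `D_e^{k,m}` into `D_e^{k,m+1}` for every order `k` and every
degree `m`. -/
theorem even_graph_complex_coboundary :
    ∃ δ : De →ₗ[ℝ] De,
      (∀ g : EvenGraph,
        δ (Submodule.Quotient.mk (p := evenRelations) (Finsupp.single g 1)) =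
          Submodule.Quotient.mk (p := evenRelations) (deltaGenE g)) ∧
      (∀ x : De, δ (δ x) = 0) ∧
      (∀ k m : ℤ, (evenPiece k m).map δ ≤ evenPiece k (m + 1)) := by
  exact ⟨EvenGraph.coboundDe, EvenGraph.coboundDe_cls, EvenGraph.coboundDe_coboundDe,
    EvenGraph.map_coboundDe_evenPiece_le⟩
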